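/- arXiv:2303.03567 — 2 statements merged into one kernel-verified Lean document; each statement's English description precedes it below -/
import Mathlib

section
/- For every d ≥ 2 there exists ε_d > 0 such that for every s ∈ (d − ε_d, d) there exists a totally disconnected Borel set A ⊆ ℝ^d with Hausdorff dimension dim_H(A) = s < d such that Δ(A \ B(0;R)) = [0, ∞) for every R > 0, where B(0;R) denotes the open Euclidean ball of radius R centred at the origin. -/
open MeasureTheory Set Metric Filter
open scoped ENNReal NNReal Topology

noncomputable section

abbrev Euc (d : ℕ) : Type := EuclideanSpace ℝ (Fin d)

/-- The closed unit cube `[0,1]^d`. -/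
def unitCube (d : ℕ) : Set (Euc d) := {x | ∀ i, x i ∈ Icc (0:ℝ) 1}

/-- The distance set `Δ(E,F) = {|x-y| : x ∈ E, y ∈ F}`. -/
def distSet {d : ℕ} (E F : Set (Euc d)) : Set ℝ :=
  {t | ∃ x ∈ E, ∃ y ∈ F, dist x y = t}

/-- `Q` is a dyadic cube of side length `l`, i.e. `Q = 2^{-k}(m + [0,1]^d)`. -/
def IsDyadicCube {d : ℕ} (Q : Set (Euc d)) (l : ℝ) : Prop :=
  ∃ (k : ℤ) (m : Fin d → ℤ), l = (2:ℝ) ^ (-k) ∧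
    Q = {x | ∀ i, (m i : ℝ) * (2:ℝ) ^ (-k) ≤ x i ∧ x i ≤ ((m i : ℝ) + 1) * (2:ℝ) ^ (-k)}

/-- The `s`-dimensional dyadic Hausdorff content: the infimum of `∑ ℓ(Q_i)^s` over
countable covers of `E` by dyadic cubes. -/
def dyadicContent {d : ℕ} (s : ℝ) (E : Set (Euc d)) : ℝ≥0∞ :=
  ⨅ (Q : ℕ → Set (Euc d)) (l : ℕ → ℝ) (_ : ∀ i, IsDyadicCube (Q i) (l i))
    (_ : E ⊆ ⋃ i, Q i), ∑' i, ENNReal.ofReal (l i ^ s)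

/-!
For `0 < r < 1 / 2` let `C` be the Cantor set of all sums `∑ εₙ (1 - r) rⁿ` with `εₙ ∈ {0, 1}`.
If `r ^ α = 1 / 2`, then `C ^ d` has dimension `d α`: the `2 ^ (n d)` cubes of side `r ^ n` bound it
from above, and reading the digits of a point in base `2` gives an `α`-Hölder map of `C ^ d` onto
the unit cube, which bounds it from below. If moreover `r ≥ 1 / 3`, then `C - C = [-1, 1]`, because
`[-1, 1]` is covered by its three copies of ratio `r` centred at `-(1 - r)`, `0` and `1 - r`. Hence
the differences of points of `C + ℤ` far from the origin exhaust `ℝ`, and `A = (C + ℤ) ^ d` realises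
every distance along a coordinate axis. Each coordinate projection of `A` has dimension `α < 1`, so
contains no interval, and `A` is totally disconnected.
-/

section

open scoped Pointwise

/-! ### Hausdorff dimension -/

section HausdorffDimension

variable {X Y : Type*} [EMetricSpace X] [EMetricSpace Y]

lemma dimH_le_of_card_mul_rpow_le {s : Set X} {α : ℝ≥0} {β : ℕ → Type*} [∀ n, Fintype (β n)]
    (t : ∀ n, β n → Set X) {δ : ℕ → ℝ≥0∞} (hδ : Tendsto δ atTop (𝓝 0))
    (hdiam : ∀ n i, ediam (t n i) ≤ δ n) (hcover : ∀ n, s ⊆ ⋃ i, t n i) {C : ℝ≥0∞} (hC : C ≠ ∞)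
    (hcard : ∀ n, Fintype.card (β n) * δ n ^ (α : ℝ) ≤ C) : dimH s ≤ α := by
  borelize X
  refine dimH_le_of_hausdorffMeasure_ne_top (ne_top_of_le_ne_top hC ?_)
  calc Measure.hausdorffMeasure (α : ℝ) s
      ≤ liminf (fun n => ∑ i, ediam (t n i) ^ (α : ℝ)) atTop :=
        Measure.hausdorffMeasure_le_liminf_sum _ s δ hδ t (.of_forall hdiam) (.of_forall hcover)
    _ ≤ liminf (fun _ : ℕ => C) atTop := liminf_le_liminf <| .of_forall fun n =>
        calc ∑ i, ediam (t n i) ^ (α : ℝ)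
            ≤ ∑ _i : β n, δ n ^ (α : ℝ) := by gcongr; exact hdiam n _
          _ = Fintype.card (β n) * δ n ^ (α : ℝ) := by simp
          _ ≤ C := hcard n
    _ = C := liminf_const C

lemma dimH_range_le_div_of_edist_le_rpow {A : Type*} {f : A → X} {g : A → Y}
    {C α : ℝ≥0} (hα : 0 < α)
    (hfg : ∀ a b, edist (g a) (g b) ≤ C * edist (f a) (f b) ^ (α : ℝ)) :
    dimH (range g) ≤ dimH (range f) / α := by
  rcases isEmpty_or_nonempty A with hA | hA
  · simp [range_eq_empty]
  have : Nonempty Y := hA.map g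
  have hfactors : g.FactorsThrough f := fun a b hab => by
    simpa [hab, hα] using hfg a b
  obtain ⟨h, rfl⟩ := (Function.factorsThrough_iff g).1 hfactors
  have hholder : HolderOnWith C α h (range f) := by
    rintro _ ⟨a, rfl⟩ _ ⟨b, rfl⟩
    exact hfg a b
  rw [range_comp]
  exact hholder.dimH_image_le hα

lemma dimH_countable_add {E : Type*} [NormedAddCommGroup E] {D : Set E} (hD : D.Countable)
    (hne : D.Nonempty) (s : Set E) : dimH (D + s) = dimH s := by
  rw [← iUnion_add_left_image, dimH_bUnion hD]
  simp only [(isometry_add_left _).dimH_image]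
  exact biSup_const hne

lemma univ_pi_add {ι : Type*} {E : ι → Type*} [∀ i, Add (E i)] (s t : ∀ i, Set (E i)) :
    (univ.pi fun i => s i + t i) = univ.pi s + univ.pi t := by
  ext x
  simp only [mem_univ_pi, Set.mem_add]
  constructor
  · intro hx
    choose y hy z hz hyz using hx
    exact ⟨y, hy, z, hz, funext hyz⟩
  · rintro ⟨y, hy, z, hz, rfl⟩ i
    exact ⟨y i, hy i, z i, hz i, rfl⟩

lemma isTotallyDisconnected_of_dimH_lt_one {s : Set ℝ} (hs : dimH s < 1) :
    IsTotallyDisconnected s := by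
  have hdense : Dense sᶜ := dense_compl_of_dimH_lt_finrank (by simpa using hs)
  intro t hts ht x hx y hy
  by_contra hne
  obtain ⟨z, hzs, hz⟩ := hdense.exists_mem_open isOpen_Ioo (nonempty_Ioo.2 (min_lt_max.2 hne))
  exact hzs (hts (ht.ordConnected.uIcc_subset hx hy (Ioo_subset_Icc_self hz)))

end HausdorffDimension

/-! ### Digit expansions -/

lemma exists_tendsto_sum_digits {𝕜 E ι : Type*} [NormedField 𝕜] [SeminormedAddCommGroup E]
    [NormedSpace 𝕜 E] {ρ : 𝕜} (hρ0 : ρ ≠ 0) (hρ : ‖ρ‖ < 1) {S : Set E} (hS : Bornology.IsBounded S)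
    (digit : ι → E) (hstep : ∀ x ∈ S, ∃ i, ρ⁻¹ • (x - digit i) ∈ S) {x : E} (hx : x ∈ S) :
    ∃ b : ℕ → ι, Tendsto (fun n => ∑ k ∈ Finset.range n, ρ ^ k • digit (b k)) atTop (𝓝 x) := by
  have : Nonempty ι := ⟨(hstep x hx).choose⟩
  choose! i hi using hstep
  let next (y : E) : E := ρ⁻¹ • (y - digit (i y))
  have hmem (n : ℕ) : next^[n] x ∈ S := MapsTo.iterate (f := next) hi n hx
  have hsum (n : ℕ) :
      ∑ k ∈ Finset.range n, ρ ^ k • digit (i (next^[k] x)) = x - ρ ^ n • next^[n] x := by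
    induction n with
    | zero => simp
    | succ n ih =>
      have hnext : ρ • next^[n + 1] x = next^[n] x - digit (i (next^[n] x)) := by
        rw [Function.iterate_succ_apply', smul_inv_smul₀ hρ0]
      rw [Finset.sum_range_succ, ih, pow_succ, mul_smul, hnext, smul_sub]
      abel
  have hremainder : Tendsto (fun n => ρ ^ n • next^[n] x) atTop (𝓝 0) := by
    obtain ⟨M, hM⟩ := hS.exists_norm_le
    refine (tendsto_pow_atTop_nhds_zero_of_norm_lt_one hρ).zero_smul_isBoundedUnder_le
      (isBoundedUnder_of ⟨M, fun n => hM _ (hmem n)⟩)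
  refine ⟨fun n => i (next^[n] x), ?_⟩
  simpa only [hsum, sub_zero] using hremainder.const_sub x

/-! ### Cantor sets -/

/-- The point of the Cantor set of ratio `r` with address `b`, namely `∑ n, b n * (1 - r) * r ^ n`.
The factor `1 - r` normalises the Cantor set to have convex hull `[0, 1]`. -/
def cantorPoint (r : ℝ) (b : ℕ → Bool) : ℝ := (1 - r) * Cardinal.cantorFunction r b

/-- The Cantor set of ratio `r`: the attractor of `x ↦ r * x` and `x ↦ r * x + (1 - r)`. The
middle-thirds set is the case `r = 1 / 3`. -/
def ratioCantorSet (r : ℝ) : Set ℝ := range (cantorPoint r)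

section CantorPoint

variable {r : ℝ} {b c : ℕ → Bool} {n : ℕ}

lemma hasSum_cantorPoint (h0 : 0 ≤ r) (h1 : r < 1) (b : ℕ → Bool) :
    HasSum (fun n => r ^ n * bif b n then 1 - r else 0) (cantorPoint r b) := by
  have hterm (n : ℕ) : r ^ n * (bif b n then 1 - r else 0) =
      (1 - r) * Cardinal.cantorFunctionAux r b n := by
    cases h : b n <;> simp [h, mul_comm]
  simp only [hterm]
  exact (Cardinal.summable_cantor_function b h0 h1).hasSum.mul_left (1 - r)

lemma cantorPoint_eq_digit_add (h0 : 0 ≤ r) (h1 : r < 1) (b : ℕ → Bool) :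
    cantorPoint r b = (bif b 0 then 1 - r else 0) + r * cantorPoint r fun n => b (n + 1) := by
  rw [cantorPoint, cantorPoint, Cardinal.cantorFunction_succ b h0 h1]
  cases b 0 <;> simp only [cond_true, cond_false] <;> ring

lemma cantorPoint_nonneg (h0 : 0 ≤ r) (h1 : r < 1) (b : ℕ → Bool) : 0 ≤ cantorPoint r b :=
  mul_nonneg (sub_nonneg.2 h1.le) (tsum_nonneg fun _ => Cardinal.cantorFunctionAux_nonneg h0)

lemma cantorPoint_le_one (h0 : 0 ≤ r) (h1 : r < 1) (b : ℕ → Bool) : cantorPoint r b ≤ 1 := by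
  have hmax : Cardinal.cantorFunction r (fun _ => true) = (1 - r)⁻¹ :=
    tsum_geometric_of_lt_one h0 h1
  calc cantorPoint r b ≤ (1 - r) * (1 - r)⁻¹ := by
        rw [← hmax]
        exact mul_le_mul_of_nonneg_left (Cardinal.cantorFunction_le h0 h1 fun _ _ => rfl)
          (sub_nonneg.2 h1.le)
    _ = 1 := mul_inv_cancel₀ (sub_pos.2 h1).ne'

lemma cantorPoint_false (r : ℝ) : cantorPoint r (fun _ => false) = 0 := by
  simp [cantorPoint, Cardinal.cantorFunction, Cardinal.cantorFunctionAux]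

lemma continuous_cantorPoint (h0 : 0 ≤ r) (h1 : r < 1) : Continuous (cantorPoint r) := by
  refine continuous_const.mul (continuous_tsum (u := fun n => r ^ n) (fun n => ?_)
    (summable_geometric_of_lt_one h0 h1) fun n b => ?_)
  · exact (continuous_of_discreteTopology (f := fun x : Bool => cond x (r ^ n) 0)).comp
      (continuous_apply n)
  · rw [Real.norm_of_nonneg (Cardinal.cantorFunctionAux_nonneg h0)]
    cases h : b n <;> simp [h, pow_nonneg h0]

lemma abs_cantorPoint_sub_le_pow (h0 : 0 ≤ r) (h1 : r < 1) (hbc : ∀ k < n, b k = c k) :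
    |cantorPoint r b - cantorPoint r c| ≤ r ^ n := by
  induction n generalizing b c with
  | zero =>
    have hb := cantorPoint_nonneg h0 h1 b
    have hc := cantorPoint_nonneg h0 h1 c
    rw [pow_zero, abs_le]
    constructor <;> linarith [cantorPoint_le_one h0 h1 b, cantorPoint_le_one h0 h1 c]
  | succ n ih =>
    rw [cantorPoint_eq_digit_add h0 h1 b, cantorPoint_eq_digit_add h0 h1 c, hbc 0 n.succ_pos,
      add_sub_add_left_eq_sub, ← mul_sub, abs_mul, abs_of_nonneg h0, pow_succ']
    exact mul_le_mul_of_nonneg_left (ih fun k hk => hbc _ (Nat.succ_lt_succ hk)) h0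

lemma le_abs_cantorPoint_sub_of_head_ne (h0 : 0 ≤ r) (h1 : r < 1) (hbc : b 0 ≠ c 0) :
    1 - 2 * r ≤ |cantorPoint r b - cantorPoint r c| := by
  wlog hb : b 0 = true generalizing b c
  · rw [abs_sub_comm]
    exact this hbc.symm (by grind)
  have hc : c 0 = false := by grind
  have hbtail := mul_nonneg h0 (cantorPoint_nonneg h0 h1 fun n => b (n + 1))
  have hctail := mul_le_of_le_one_right h0 (cantorPoint_le_one h0 h1 fun n => c (n + 1))
  rw [cantorPoint_eq_digit_add h0 h1 b, cantorPoint_eq_digit_add h0 h1 c, hb, hc, cond_true,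
    cond_false]
  exact le_abs.2 (.inl (by linarith))

lemma mul_pow_le_abs_cantorPoint_sub (h0 : 0 ≤ r) (h1 : r < 1) (hbc : ∀ k < n, b k = c k)
    (hn : b n ≠ c n) : (1 - 2 * r) * r ^ n ≤ |cantorPoint r b - cantorPoint r c| := by
  induction n generalizing b c with
  | zero => simpa using le_abs_cantorPoint_sub_of_head_ne h0 h1 hn
  | succ n ih =>
    rw [cantorPoint_eq_digit_add h0 h1 b, cantorPoint_eq_digit_add h0 h1 c, hbc 0 n.succ_pos,
      add_sub_add_left_eq_sub, ← mul_sub, abs_mul, abs_of_nonneg h0, pow_succ', mul_left_comm]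
    exact mul_le_mul_of_nonneg_left (ih (fun k hk => hbc _ (Nat.succ_lt_succ hk)) hn) h0

lemma abs_cantorPoint_rpow_sub_le {α : ℝ} (h0 : 0 ≤ r) (h1 : r < 1 / 2) (hα : 0 < α)
    (b c : ℕ → Bool) :
    |cantorPoint (r ^ α) b - cantorPoint (r ^ α) c| ≤
      ((1 - 2 * r)⁻¹ * |cantorPoint r b - cantorPoint r c|) ^ α := by
  have hgap : 0 < 1 - 2 * r := by linarith
  rcases eq_or_ne b c with rfl | hbc
  · simp [Real.zero_rpow hα.ne']
  have hprefix : ∀ k < PiNat.firstDiff b c, b k = c k := fun _ => PiNat.apply_eq_of_lt_firstDiff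
  calc |cantorPoint (r ^ α) b - cantorPoint (r ^ α) c|
      ≤ (r ^ α) ^ PiNat.firstDiff b c :=
        abs_cantorPoint_sub_le_pow (by positivity)
          (Real.rpow_lt_one h0 (by linarith) hα) hprefix
    _ = (r ^ PiNat.firstDiff b c) ^ α := Real.rpow_pow_comm h0 α _
    _ ≤ ((1 - 2 * r)⁻¹ * |cantorPoint r b - cantorPoint r c|) ^ α := by
        refine Real.rpow_le_rpow (by positivity) ?_ hα.le
        rw [le_inv_mul_iff₀ hgap]
        exact mul_pow_le_abs_cantorPoint_sub h0 (by linarith) hprefix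
          (PiNat.apply_firstDiff_ne hbc)

lemma edist_piMap_cantorPoint_rpow_le {ι : Type*} [Fintype ι] {α : ℝ≥0} (h0 : 0 ≤ r)
    (h1 : r < 1 / 2) (hα : 0 < α) (b c : ι → ℕ → Bool) :
    edist (Pi.map (fun _ => cantorPoint (r ^ (α : ℝ))) b)
        (Pi.map (fun _ => cantorPoint (r ^ (α : ℝ))) c) ≤
      Real.toNNReal ((1 - 2 * r)⁻¹ ^ (α : ℝ)) *
        edist (Pi.map (fun _ => cantorPoint r) b) (Pi.map (fun _ => cantorPoint r) c) ^
          (α : ℝ) := by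
  have hgap : 0 < 1 - 2 * r := by linarith
  have hα' : (0 : ℝ) < α := hα
  refine edist_pi_le_iff.2 fun i => ?_
  calc edist (cantorPoint (r ^ (α : ℝ)) (b i)) (cantorPoint (r ^ (α : ℝ)) (c i))
      ≤ ENNReal.ofReal
          (((1 - 2 * r)⁻¹ * |cantorPoint r (b i) - cantorPoint r (c i)|) ^ (α : ℝ)) := by
        rw [edist_dist, Real.dist_eq]
        exact ENNReal.ofReal_le_ofReal (abs_cantorPoint_rpow_sub_le h0 h1 hα' _ _)
    _ = Real.toNNReal ((1 - 2 * r)⁻¹ ^ (α : ℝ)) *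
          edist (cantorPoint r (b i)) (cantorPoint r (c i)) ^ (α : ℝ) := by
        rw [Real.mul_rpow (by positivity) (abs_nonneg _), ENNReal.ofReal_mul (by positivity),
          ← ENNReal.ofReal_rpow_of_nonneg (abs_nonneg _) hα'.le, ← Real.dist_eq, ← edist_dist]
        rfl
    _ ≤ _ := by
        gcongr
        exact edist_le_pi_edist (Pi.map (fun _ => cantorPoint r) b) _ i

end CantorPoint

section RatioCantorSet

variable {r : ℝ}

lemma ratioCantorSet_subset_Icc (h0 : 0 ≤ r) (h1 : r < 1) : ratioCantorSet r ⊆ Icc 0 1 :=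
  range_subset_iff.2 fun b => ⟨cantorPoint_nonneg h0 h1 b, cantorPoint_le_one h0 h1 b⟩

lemma isCompact_ratioCantorSet (h0 : 0 ≤ r) (h1 : r < 1) : IsCompact (ratioCantorSet r) :=
  isCompact_range (continuous_cantorPoint h0 h1)

lemma zero_mem_ratioCantorSet (r : ℝ) : 0 ∈ ratioCantorSet r := ⟨_, cantorPoint_false r⟩

lemma ratioCantorSet_eq_Icc (h0 : 1 / 2 ≤ r) (h1 : r < 1) : ratioCantorSet r = Icc 0 1 := by
  have hr : 0 < r := by linarith
  refine (ratioCantorSet_subset_Icc hr.le h1).antisymm fun x hx => ?_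
  have hstep : ∀ y ∈ Icc (0 : ℝ) 1, ∃ i : Bool,
      r⁻¹ • (y - bif i then 1 - r else 0) ∈ Icc (0 : ℝ) 1 := fun y hy => by
    simp only [smul_eq_mul, mem_Icc, le_inv_mul_iff₀ hr, inv_mul_le_iff₀ hr]
    rcases le_total y r with hyr | hry
    · exact ⟨false, by rw [cond_false]; constructor <;> linarith [hy.1]⟩
    · exact ⟨true, by rw [cond_true]; constructor <;> linarith [hy.2]⟩
  obtain ⟨b, hb⟩ := exists_tendsto_sum_digits hr.ne' (by rwa [Real.norm_of_nonneg hr.le])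
    (isBounded_Icc 0 1) _ hstep hx
  exact ⟨b, tendsto_nhds_unique (hasSum_cantorPoint hr.le h1 b).tendsto_sum_nat hb⟩

lemma ratioCantorSet_sub_self (h0 : 1 / 3 ≤ r) (h1 : r < 1) :
    ratioCantorSet r - ratioCantorSet r = Icc (-1) 1 := by
  have hr : 0 < r := by linarith
  refine Subset.antisymm ?_ fun x hx => ?_
  · rintro _ ⟨x, hx, y, hy, rfl⟩
    have hx := ratioCantorSet_subset_Icc hr.le h1 hx
    have hy := ratioCantorSet_subset_Icc hr.le h1 hy
    constructor <;> linarith [hx.1, hx.2, hy.1, hy.2]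
  have hstep : ∀ y ∈ Icc (-1 : ℝ) 1, ∃ i : Bool × Bool,
      r⁻¹ • (y - ((bif i.1 then 1 - r else 0) - bif i.2 then 1 - r else 0)) ∈ Icc (-1 : ℝ) 1 :=
    fun y hy => by
      simp only [smul_eq_mul, mem_Icc, le_inv_mul_iff₀ hr, inv_mul_le_iff₀ hr]
      rcases le_total y (-r) with hyr | hry
      · exact ⟨(false, true), by simp only [cond_false, cond_true]; constructor <;> linarith [hy.1]⟩
      rcases le_total y r with hyr | hry
      · exact ⟨(false, false), by simp only [cond_false]; constructor <;> linarith⟩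
      · exact ⟨(true, false), by simp only [cond_false, cond_true]; constructor <;> linarith [hy.2]⟩
  obtain ⟨b, hb⟩ := exists_tendsto_sum_digits hr.ne' (by rwa [Real.norm_of_nonneg hr.le])
    (isBounded_Icc (-1) 1) _ hstep hx
  have hsum := (hasSum_cantorPoint hr.le h1 fun n => (b n).1).sub
    (hasSum_cantorPoint hr.le h1 fun n => (b n).2)
  simp only [← mul_sub] at hsum
  exact ⟨_, ⟨_, rfl⟩, _, ⟨_, rfl⟩, tendsto_nhds_unique hsum.tendsto_sum_nat hb⟩

end RatioCantorSet

/-! ### Dimension of powers of Cantor sets -/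

section Dimension

variable {r : ℝ} {α : ℝ≥0} (ι : Type*) [Fintype ι]

lemma card_mul_ofReal_pow_rpow_le_one [DecidableEq ι] (h0 : 0 ≤ r) (hα : r ^ (α : ℝ) ≤ 1 / 2)
    (n : ℕ) :
    Fintype.card (ι → Fin n → Bool) *
      ENNReal.ofReal (r ^ n) ^ ((Fintype.card ι * α : ℝ≥0) : ℝ) ≤ 1 := by
  have hreal : ((2 : ℝ) ^ n) ^ Fintype.card ι * (r ^ n) ^ (Fintype.card ι * α : ℝ) =
      ((2 * r ^ (α : ℝ)) ^ n) ^ Fintype.card ι := by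
    rw [mul_comm (Fintype.card ι : ℝ), Real.rpow_mul (by positivity), Real.rpow_natCast,
      ← Real.rpow_pow_comm h0, ← mul_pow, ← mul_pow]
  have hle : 2 * r ^ (α : ℝ) ≤ 1 := by linarith
  rw [ENNReal.ofReal_rpow_of_nonneg (by positivity) (by positivity), ← ENNReal.ofReal_natCast,
    ← ENNReal.ofReal_mul (by positivity), ENNReal.ofReal_le_one]
  simp only [Fintype.card_fun, Fintype.card_bool, Fintype.card_fin]
  push_cast
  rw [hreal]
  exact pow_le_one₀ (by positivity) (pow_le_one₀ (by positivity) hle)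

lemma dimH_pi_ratioCantorSet_le (h0 : 0 ≤ r) (hα : r ^ (α : ℝ) ≤ 1 / 2) :
    dimH (univ.pi fun _ : ι => ratioCantorSet r) ≤ Fintype.card ι * α := by
  classical
  have h1 : r < 1 := lt_of_not_ge fun h => by linarith [Real.one_le_rpow h α.coe_nonneg]
  let cube (n : ℕ) (w : ι → Fin n → Bool) : Set (ι → ℝ) :=
    Pi.map (fun _ => cantorPoint r) '' {b | ∀ i (k : Fin n), b i k = w i k}
  have hdiam (n : ℕ) (w : ι → Fin n → Bool) : ediam (cube n w) ≤ ENNReal.ofReal (r ^ n) := by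
    refine ediam_le ?_
    rintro _ ⟨b, hb, rfl⟩ _ ⟨c, hc, rfl⟩
    refine edist_pi_le_iff.2 fun i => ?_
    rw [edist_dist, Real.dist_eq]
    exact ENNReal.ofReal_le_ofReal <| abs_cantorPoint_sub_le_pow h0 h1 fun k hk =>
      (hb i ⟨k, hk⟩).trans (hc i ⟨k, hk⟩).symm
  have hcover (n : ℕ) : (univ.pi fun _ : ι => ratioCantorSet r) ⊆ ⋃ w, cube n w := by
    simp only [ratioCantorSet, ← range_piMap]
    rintro _ ⟨b, rfl⟩
    exact mem_iUnion.2 ⟨fun i k => b i k, b, fun _ _ => rfl, rfl⟩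
  have hlim : Tendsto (fun n : ℕ => ENNReal.ofReal (r ^ n)) atTop (𝓝 0) := by
    simpa using ENNReal.tendsto_ofReal (tendsto_pow_atTop_nhds_zero_of_lt_one h0 h1)
  simpa using dimH_le_of_card_mul_rpow_le cube hlim hdiam hcover ENNReal.one_ne_top
    (card_mul_ofReal_pow_rpow_le_one ι h0 hα)

lemma dimH_pi_Icc_zero_one : dimH (univ.pi fun _ : ι => Icc (0 : ℝ) 1) = Fintype.card ι := by
  rw [Real.dimH_of_nonempty_interior, Module.finrank_fintype_fun_eq_card]
  rw [interior_pi_set finite_univ]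
  exact ⟨fun _ => 1 / 2, fun i _ => by norm_num [interior_Icc]⟩

lemma le_dimH_pi_ratioCantorSet (h0 : 0 ≤ r) (h1 : r < 1 / 2) (hα0 : 0 < α)
    (hα : 1 / 2 ≤ r ^ (α : ℝ)) :
    Fintype.card ι * α ≤ dimH (univ.pi fun _ : ι => ratioCantorSet r) := by
  have hcube : ratioCantorSet (r ^ (α : ℝ)) = Icc 0 1 :=
    ratioCantorSet_eq_Icc hα (Real.rpow_lt_one h0 (by linarith) hα0)
  have hle : dimH (univ.pi fun _ : ι => ratioCantorSet (r ^ (α : ℝ))) ≤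
      dimH (univ.pi fun _ : ι => ratioCantorSet r) / α := by
    simpa only [ratioCantorSet, range_piMap] using
      dimH_range_le_div_of_edist_le_rpow hα0 (edist_piMap_cantorPoint_rpow_le (ι := ι) h0 h1 hα0)
  rw [hcube, dimH_pi_Icc_zero_one] at hle
  exact (ENNReal.le_div_iff_mul_le (.inl (by simpa using hα0.ne')) (.inl (by simp))).1 hle

lemma dimH_pi_ratioCantorSet (h0 : 0 ≤ r) (h1 : r < 1 / 2) (hα : r ^ (α : ℝ) = 1 / 2) :
    dimH (univ.pi fun _ : ι => ratioCantorSet r) = Fintype.card ι * α := by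
  have hα0 : 0 < α := pos_iff_ne_zero.2 (by rintro rfl; norm_num at hα)
  exact (dimH_pi_ratioCantorSet_le ι h0 hα.le).antisymm
    (le_dimH_pi_ratioCantorSet ι h0 h1 hα0 hα.ge)

end Dimension

/-! ### Integer translates of Cantor sets -/

/-- The union of the integer translates of the Cantor set of ratio `r`. -/
def periodicCantorSet (r : ℝ) : Set ℝ := range ((↑) : ℤ → ℝ) + ratioCantorSet r

section PeriodicCantorSet

variable {r : ℝ}

lemma isClosed_periodicCantorSet (h0 : 0 ≤ r) (h1 : r < 1) : IsClosed (periodicCantorSet r) :=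
  Int.isClosedEmbedding_coe_real.isClosed_range.add_right_of_isCompact
    (isCompact_ratioCantorSet h0 h1)

lemma zero_mem_periodicCantorSet (r : ℝ) : 0 ∈ periodicCantorSet r :=
  ⟨0, ⟨0, Int.cast_zero⟩, 0, zero_mem_ratioCantorSet r, add_zero 0⟩

lemma intCast_add_mem_periodicCantorSet {x : ℝ} (m : ℤ) (hx : x ∈ periodicCantorSet r) :
    m + x ∈ periodicCantorSet r := by
  obtain ⟨_, ⟨k, rfl⟩, y, hy, rfl⟩ := hx
  exact ⟨_, ⟨m + k, rfl⟩, y, hy, by push_cast; ring⟩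

lemma periodicCantorSet_sub_self (h0 : 1 / 3 ≤ r) (h1 : r < 1) :
    periodicCantorSet r - periodicCantorSet r = univ := by
  refine eq_univ_of_forall fun t => ?_
  have hfract : Int.fract t ∈ ratioCantorSet r - ratioCantorSet r := by
    rw [ratioCantorSet_sub_self h0 h1]
    exact ⟨by linarith [Int.fract_nonneg t], (Int.fract_lt_one t).le⟩
  obtain ⟨x, hx, y, hy, hxy : x - y = Int.fract t⟩ := hfract
  refine ⟨_, ⟨⌊t⌋, ⟨_, rfl⟩, x, hx, rfl⟩, _, ⟨0, ⟨0, Int.cast_zero⟩, y, hy, rfl⟩, ?_⟩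
  linarith [Int.floor_add_fract t]

lemma periodicCantorSet_sdiff_ball_sub_self (h0 : 1 / 3 ≤ r) (h1 : r < 1) (R : ℝ) :
    periodicCantorSet r \ ball 0 R - periodicCantorSet r \ ball 0 R = univ := by
  refine eq_univ_of_forall fun t => ?_
  obtain ⟨x, hx, y, hy, hxy : x - y = t⟩ := (periodicCantorSet_sub_self h0 h1).ge (mem_univ t)
  obtain ⟨m, hm⟩ := exists_nat_ge (max (R - x) (R - y))
  have hfar {z : ℝ} (hz : z ∈ periodicCantorSet r) (hzm : R - z ≤ m) :
      (m : ℤ) + z ∈ periodicCantorSet r \ ball 0 R := by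
    refine ⟨intCast_add_mem_periodicCantorSet m hz, fun hball => ?_⟩
    rw [mem_ball_zero_iff, Real.norm_eq_abs] at hball
    push_cast at hball
    linarith [le_abs_self (m + z)]
  exact ⟨_, hfar hx ((le_max_left _ _).trans hm), _, hfar hy ((le_max_right _ _).trans hm),
    by linarith⟩

lemma dimH_pi_periodicCantorSet (r : ℝ) (ι : Type*) [Fintype ι] :
    dimH (univ.pi fun _ : ι => periodicCantorSet r) =
      dimH (univ.pi fun _ : ι => ratioCantorSet r) := by
  simp only [periodicCantorSet, univ_pi_add]
  exact dimH_countable_add (countable_univ_pi fun _ => countable_range _)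
    (univ_pi_nonempty_iff.2 fun _ => range_nonempty _) _

lemma dimH_periodicCantorSet {α : ℝ≥0} (h0 : 0 ≤ r) (h1 : r < 1 / 2)
    (hα : r ^ (α : ℝ) = 1 / 2) : dimH (periodicCantorSet r) = α := by
  have hpi : IsometryEquiv.funUnique Unit ℝ ⁻¹' periodicCantorSet r =
      univ.pi fun _ : Unit => periodicCantorSet r := by
    ext; simp [Unique.forall_iff]
  rw [← (IsometryEquiv.funUnique Unit ℝ).dimH_preimage, hpi, dimH_pi_periodicCantorSet,
    dimH_pi_ratioCantorSet Unit h0 h1 hα]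
  simp

end PeriodicCantorSet

/-! ### Powers of subsets of the line in Euclidean space -/

/-- The Cartesian power `s ^ ι` of a set `s ⊆ ℝ`, as a subset of Euclidean space. -/
def euclideanPower (ι : Type*) (s : Set ℝ) : Set (EuclideanSpace ℝ ι) := {x | ∀ i, x i ∈ s}

section EuclideanPower

variable {ι : Type*} {s : Set ℝ}

lemma isClosed_euclideanPower (hs : IsClosed s) : IsClosed (euclideanPower ι s) := by
  simp only [euclideanPower, ofPred_forall]
  exact isClosed_iInter fun i => hs.preimage (by fun_prop)

lemma isTotallyDisconnected_euclideanPower (hs : IsTotallyDisconnected s) :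
    IsTotallyDisconnected (euclideanPower ι s) := by
  intro t ht hconn x hx y hy
  ext i
  exact hs ((fun z : EuclideanSpace ℝ ι => z i) '' t) (image_subset_iff.2 fun z hz => ht hz i)
    (hconn.image _ (by fun_prop)) (mem_image_of_mem _ hx) (mem_image_of_mem _ hy)

lemma dimH_euclideanPower [Fintype ι] (s : Set ℝ) :
    dimH (euclideanPower ι s) = dimH (univ.pi fun _ : ι => s) := by
  rw [← (EuclideanSpace.equiv ι ℝ).dimH_preimage]
  congr 1
  ext
  simp [euclideanPower]

lemma single_mem_euclideanPower [DecidableEq ι] (h0 : 0 ∈ s) {x : ℝ} (hx : x ∈ s) (i : ι) :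
    EuclideanSpace.single i x ∈ euclideanPower ι s := by
  intro j
  rcases eq_or_ne j i with rfl | hji
  · simpa using hx
  · simpa [hji] using h0

lemma distSet_euclideanPower_sdiff_ball {d : ℕ} [NeZero d] (h0 : 0 ∈ s) {R : ℝ}
    (hs : s \ ball 0 R - s \ ball 0 R = univ) :
    distSet (euclideanPower (Fin d) s \ ball 0 R) (euclideanPower (Fin d) s \ ball 0 R) =
      Ici 0 := by
  refine Subset.antisymm ?_ fun t (ht : 0 ≤ t) => ?_
  · rintro _ ⟨x, -, y, -, rfl⟩
    exact dist_nonneg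
  obtain ⟨x, hx, y, hy, hxy : x - y = t⟩ := hs.ge (mem_univ t)
  have hsingle {z : ℝ} (hz : z ∈ s \ ball 0 R) :
      EuclideanSpace.single 0 z ∈ euclideanPower (Fin d) s \ ball 0 R :=
    ⟨single_mem_euclideanPower h0 hz.1 0, by simpa using hz.2⟩
  refine ⟨_, hsingle hx, _, hsingle hy, ?_⟩
  rw [PiLp.dist_single_same, Real.dist_eq, hxy, abs_of_nonneg ht]

end EuclideanPower

lemma exists_ratio_rpow_eq_half {α : ℝ} (h0 : Real.logb 3 2 ≤ α) (h1 : α < 1) :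
    ∃ r : ℝ, 1 / 3 ≤ r ∧ r < 1 / 2 ∧ r ^ α = 1 / 2 := by
  have hlog : 0 < Real.logb 3 2 := Real.logb_pos (by norm_num) (by norm_num)
  have hα : 0 < α := hlog.trans_le h0
  have hhalf : ((1 / 2 : ℝ) ^ α⁻¹) ^ α = 1 / 2 := Real.rpow_inv_rpow (by norm_num) hα.ne'
  refine ⟨(1 / 2) ^ α⁻¹, ?_, ?_, hhalf⟩
  · rw [← Real.rpow_le_rpow_iff (by norm_num) (by positivity) hα, hhalf]
    calc (1 / 3 : ℝ) ^ α ≤ (1 / 3) ^ Real.logb 3 2 :=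
          Real.rpow_le_rpow_of_exponent_ge (by norm_num) (by norm_num) h0
      _ = 1 / 2 := by
          rw [Real.div_rpow zero_le_one (by norm_num), Real.one_rpow,
            Real.rpow_logb (by norm_num) (by norm_num) (by norm_num)]
  · simpa using Real.rpow_lt_rpow_of_exponent_gt (x := 1 / 2) (by norm_num) (by norm_num)
      ((one_lt_inv₀ hα).2 h1)

theorem statement6_general (d : ℕ) [NeZero d] (s : ℝ) (hs : d * Real.logb 3 2 ≤ s) (hsd : s < d) :
    ∃ A : Set (Euc d), IsClosed A ∧ IsTotallyDisconnected A ∧ dimH A = ENNReal.ofReal s ∧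
      ∀ R : ℝ, distSet (A \ ball 0 R) (A \ ball 0 R) = Ici 0 := by
  have hd : (0 : ℝ) < d := by exact_mod_cast NeZero.pos d
  have hlog : 0 < Real.logb 3 2 := Real.logb_pos (by norm_num) (by norm_num)
  have hs0 : 0 < s := lt_of_lt_of_le (by positivity) hs
  obtain ⟨α, hα⟩ : ∃ α : ℝ≥0, (α : ℝ) = s / d := ⟨⟨s / d, by positivity⟩, rfl⟩
  have hα1 : (α : ℝ) < 1 := by rwa [hα, div_lt_one hd]
  obtain ⟨r, hr3, hr2, hrα⟩ := exists_ratio_rpow_eq_half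
    (by rwa [hα, le_div_iff₀' hd] : Real.logb 3 2 ≤ α) hα1
  have hr0 : 0 ≤ r := by linarith
  have hr1 : r < 1 := by linarith
  refine ⟨euclideanPower (Fin d) (periodicCantorSet r),
    isClosed_euclideanPower (isClosed_periodicCantorSet hr0 hr1),
    isTotallyDisconnected_euclideanPower (isTotallyDisconnected_of_dimH_lt_one ?_), ?_,
    fun R => distSet_euclideanPower_sdiff_ball (zero_mem_periodicCantorSet r)
      (periodicCantorSet_sdiff_ball_sub_self hr3 hr1 R)⟩
  · rw [dimH_periodicCantorSet hr0 hr2 hrα]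
    exact_mod_cast hα1
  · rw [dimH_euclideanPower, dimH_pi_periodicCantorSet, dimH_pi_ratioCantorSet _ hr0 hr2 hrα,
      Fintype.card_fin, (eq_div_iff hd.ne').1 hα |>.symm, mul_comm,
      ENNReal.ofReal_mul (by positivity)]
    simp

end

/-- Corollary 1.7: for `d ≥ 2` and `s` sufficiently close to `d`, there exists a
totally disconnected Borel set `A ⊆ ℝ^d` with `dim_H(A) = s < d` such that
`Δ(A \ B(0;R)) = [0,∞)` for every `R > 0`. -/
theorem statement6 (d : ℕ) (hd : 2 ≤ d) :
    ∃ ε : ℝ, 0 < ε ∧ ∀ s : ℝ, (d : ℝ) - ε < s → s < d →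
      ∃ A : Set (Euc d), MeasurableSet A ∧ IsTotallyDisconnected A ∧
        dimH A = ENNReal.ofReal s ∧
        ∀ R : ℝ, 0 < R →
          distSet (A \ Metric.ball 0 R) (A \ Metric.ball 0 R) = Ici 0 := by
  have : NeZero d := ⟨by lia⟩
  have hlog : Real.logb 3 2 < 1 := by
    rw [Real.logb_lt_iff_lt_rpow] <;> norm_num
  refine ⟨d * (1 - Real.logb 3 2), by have := sub_pos.2 hlog; positivity, fun s hs hsd => ?_⟩
  obtain ⟨A, hclosed, hdisc, hdim, hdist⟩ := statement6_general d s (by linarith) hsd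
  exact ⟨A, hclosed.measurableSet, hdisc, hdim, fun R _ => hdist R⟩
end
end

section
/- Let d ≥ 2. For all sufficiently small ρ ∈ (0,1) there exist constants 0 < a_ρ < b_ρ < 1 and ε_ρ > 0, depending only on d and ρ, with the following property: if A ⊆ ℝ^d is a Borel set for which there exist an exponent s > d − ε_ρ and a sequence R_n → ∞ with R_{n+1}/R_n ≤ b_ρ/a_ρ such that sup_{x ∈ ℝ^d} H^s_∞(A_{R_n}(x)) > 1 − ρ for all sufficiently large n, then A admits all sufficiently large distances, i.e. there exists M > 0 with Δ(A) ⊇ [M, ∞). -/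
open MeasureTheory Set Metric Filter
open scoped ENNReal NNReal Topology

noncomputable section

/-- The normalized truncation `A_R(x) = T_{x,R}[A ∩ (x + [0,R]^d)]`,
where `T_{x,R}(y) = (y - x)/R`. -/
def normTrunc {d : ℕ} (A : Set (Euc d)) (R : ℝ) (x : Euc d) : Set (Euc d) :=
  (fun y => R⁻¹ • (y - x)) '' (A ∩ {y : Euc d | ∀ i, y i - x i ∈ Icc (0:ℝ) R})

/-!
It suffices to show that a set `E` in the unit cube whose content is close to `1` realises every
distance `t` in a fixed window `[a, 1/4]`: every large distance falls into this window after
rescaling by one of the `R n`.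

By capacitability, if the distance `t` is missed, then some `V ⊆ E` of large content misses it with
a gap `δ`. Distributing mass along the dyadic cubes produces a measure `μ` on `V` with
`μ Q ≲ ℓ(Q) ^ (d - ε)` at all scales between a fixed `2^{-(l+1)}` and an arbitrarily small one, and
charging at least `2^{-(l+1)d}` to almost all cubes of generation `l + 1`. Let `τ` be a probability
measure on the sphere of radius `t` with characteristic function `O(|ξ| ^ (-1/2))`, and count the
pairs of points at distance roughly `t` by Gaussian averages at scale `2^{-j}` of
`τ ∗ (law of x - y)`. At scale `2^{-(l+1)}` the average is bounded below, since almost all cubes are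
charged. Passing from scale `2^{-j}` to `2^{-(j+1)}` changes it by at most a constant times
`2 ^ (-j/4)`, by Plancherel and the decay of the characteristic function, so the changes sum to
little if `l` is large. Hence the averages stay bounded below, whereas the gap makes them tend to
`0`.
-/

/-! ### Net contents on a tree of cells -/

/-- A nested sequence of finite partitions of `X`: the cells of generation `j` are the fibres of
`code j`, labelled by the finite set `level j`, and `parent` sends the label of a cell to the label
of the cell of the previous generation containing it. -/
structure TreeCoding (X ι : Type*) where
  code : ℕ → X → ι
  parent : ι → ι
  level : ℕ → Finset ι
  parent_code_succ : ∀ j x, parent (code (j + 1) x) = code j x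
  code_mem_level : ∀ j x, code j x ∈ level j

namespace TreeCoding

variable {X ι : Type*} (T : TreeCoding X ι)

/-- The cell of generation `j` with label `q`. -/
def cell (j : ℕ) (q : ι) : Set X := {x | T.code j x = q}

/-- The labels of the cells of generation `j + 1` contained in the cell of generation `j` with
label `q`. -/
def children [DecidableEq ι] (j : ℕ) (q : ι) : Finset ι :=
  (T.level (j + 1)).filter fun c => T.parent c = q

/-- The cells with generation and label in `S` cover `E`. -/
def Covers (S : Set (ℕ × ι)) (E : Set X) : Prop := ∀ x ∈ E, ∃ j, (j, T.code j x) ∈ S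

/-- The members of `S` that lie in no other member of `S`. -/
def maximal (S : Set (ℕ × ι)) : Set (ℕ × ι) :=
  {p | p ∈ S ∧ ∀ i < p.1, (i, T.parent^[p.1 - i] p.2) ∉ S}

variable {T}

theorem Covers.mono {S S' : Set (ℕ × ι)} {E E' : Set X} (h : T.Covers S E) (hS : S ⊆ S')
    (hE : E' ⊆ E) : T.Covers S' E' :=
  fun x hx => (h x (hE hx)).imp fun _ hj => hS hj

theorem iterate_parent_code {i j : ℕ} (hij : i ≤ j) (x : X) :
    T.parent^[j - i] (T.code j x) = T.code i x := by
  obtain ⟨n, rfl⟩ := Nat.exists_eq_add_of_le hij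
  rw [Nat.add_sub_cancel_left]
  induction n with
  | zero => rfl
  | succ n ih =>
    rw [Function.iterate_succ_apply, ← add_assoc, T.parent_code_succ, ih (Nat.le_add_right i n)]

theorem maximal_subset (S : Set (ℕ × ι)) : T.maximal S ⊆ S := fun _ hp => hp.1

theorem notMem_maximal {S : Set (ℕ × ι)} {i j : ℕ} (hij : i < j) {x : X}
    (hi : (i, T.code i x) ∈ S) : (j, T.code j x) ∉ T.maximal S :=
  fun hj => hj.2 i hij (by rwa [iterate_parent_code hij.le])

theorem Covers.maximal {S : Set (ℕ × ι)} {E : Set X} (h : T.Covers S E) :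
    T.Covers (T.maximal S) E := by
  classical
  intro x hx
  have hex := h x hx
  refine ⟨Nat.find hex, Nat.find_spec hex, fun i hi => ?_⟩
  rw [iterate_parent_code hi.le]
  exact Nat.find_min hex hi

theorem Covers.diff_maximal_union_inter {S S' : Set (ℕ × ι)} {E : Set X} (h : T.Covers S E)
    (h' : T.Covers S' E) : T.Covers ((S ∪ S') \ T.maximal (S ∪ S') ∪ S ∩ S') E := by
  intro x hx
  obtain ⟨i, hi⟩ := h x hx
  obtain ⟨j, hj⟩ := h' x hx
  rcases lt_trichotomy i j with hij | rfl | hij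
  · exact ⟨j, .inl ⟨.inr hj, notMem_maximal hij (.inl hi)⟩⟩
  · exact ⟨i, .inr ⟨hi, hj⟩⟩
  · exact ⟨i, .inl ⟨.inl hi, notMem_maximal hij (.inr hj)⟩⟩

section Content

variable [MeasurableSpace ι] {w : ℕ → ℝ≥0∞} {E F : Set X} {S : Set (ℕ × ι)}

/-- The measure of a family of cells when each cell of generation `j` has mass `w j`. -/
def weight (w : ℕ → ℝ≥0∞) : Measure (ℕ × ι) := Measure.count.withDensity fun p => w p.1

variable (T) in
/-- The net content of `E`: the least total weight of a family of cells covering `E`. -/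
def content (w : ℕ → ℝ≥0∞) (E : Set X) : ℝ≥0∞ := ⨅ S : {S // T.Covers S E}, weight w S.1

theorem content_le_weight (h : T.Covers S E) : T.content w E ≤ weight w S :=
  iInf_le (fun S : {S // T.Covers S E} => weight w S.1) ⟨S, h⟩

theorem content_mono (h : E ⊆ F) : T.content w E ≤ T.content w F :=
  le_iInf fun S => content_le_weight (S.2.mono subset_rfl h)

theorem content_empty : T.content w ∅ = 0 := by
  have h : T.content w ∅ ≤ weight w ∅ := content_le_weight fun _ hx => hx.elim
  simpa using h

theorem content_union_le : T.content w (E ∪ F) ≤ T.content w E + T.content w F := by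
  simp only [content, ENNReal.iInf_add, ENNReal.add_iInf]
  refine le_iInf₂ fun S' S => (content_le_weight (S := S.1 ∪ S'.1) ?_).trans (measure_union_le _ _)
  rintro x (hx | hx)
  · exact (S.2 x hx).imp fun _ => .inl
  · exact (S'.2 x hx).imp fun _ => .inr

theorem content_biUnion_le {κ : Type*} (s : Finset κ) (f : κ → Set X) :
    T.content w (⋃ c ∈ s, f c) ≤ ∑ c ∈ s, T.content w (f c) := by
  classical
  induction s using Finset.induction_on with
  | empty => simp [content_empty]
  | insert a s ha ih =>
    rw [Finset.set_biUnion_insert, Finset.sum_insert ha]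
    exact content_union_le.trans (by gcongr)

theorem content_inter_cell_le_sum_children [DecidableEq ι] (j : ℕ) (q : ι) :
    T.content w (E ∩ T.cell j q) ≤ ∑ c ∈ T.children j q, T.content w (E ∩ T.cell (j + 1) c) := by
  refine (content_mono ?_).trans (content_biUnion_le _ _)
  rintro x ⟨hxE, hxq⟩
  refine mem_iUnion₂.2 ⟨T.code (j + 1) x, ?_, hxE, rfl⟩
  exact Finset.mem_filter.2 ⟨T.code_mem_level _ _, (T.parent_code_succ j x).trans hxq⟩

theorem content_le_sum_level (j : ℕ) :
    T.content w E ≤ ∑ q ∈ T.level j, T.content w (E ∩ T.cell j q) :=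
  have hE : E ⊆ ⋃ q ∈ T.level j, E ∩ T.cell j q :=
    fun x hx => mem_iUnion₂.2 ⟨T.code j x, T.code_mem_level _ _, hx, rfl⟩
  (content_mono hE).trans (content_biUnion_le _ _)

variable [MeasurableSingletonClass ι]

theorem content_inter_cell_le (j : ℕ) (q : ι) : T.content w (E ∩ T.cell j q) ≤ w j := by
  have hcovers : T.Covers {(j, q)} (E ∩ T.cell j q) := fun x hx => ⟨j, by rw [hx.2]; rfl⟩
  refine (content_le_weight hcovers).trans (le_of_eq ?_)
  rw [weight, withDensity_apply _ (measurableSet_singleton _), lintegral_singleton,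
    Measure.count_singleton, mul_one]

variable (T) in
/-- The labels of the cells of generation `j` in which `E` has content at least the proportion `r`
of the weight of the cell. -/
def heavyCells (w : ℕ → ℝ≥0∞) (r : ℝ≥0∞) (E : Set X) (j : ℕ) : Finset ι :=
  (T.level j).filter fun q => r * w j ≤ T.content w (E ∩ T.cell j q)

theorem content_le_card_heavyCells_add (r : ℝ≥0∞) (j : ℕ) :
    T.content w E ≤ ((T.heavyCells w r E j).card + (T.level j).card * r) * w j := by
  calc T.content w E ≤ ∑ q ∈ T.level j, T.content w (E ∩ T.cell j q) := content_le_sum_level j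
    _ ≤ ∑ q ∈ T.level j,
        ((if r * w j ≤ T.content w (E ∩ T.cell j q) then w j else 0) + r * w j) := by
        gcongr with q
        split_ifs with hq
        · exact (content_inter_cell_le j q).trans le_self_add
        · rw [zero_add]
          exact (not_le.1 hq).le
    _ = ((T.heavyCells w r E j).card + (T.level j).card * r) * w j := by
        rw [Finset.sum_add_distrib, ← Finset.sum_filter, Finset.sum_const, Finset.sum_const,
          heavyCells, nsmul_eq_mul, nsmul_eq_mul]
        ring

variable [Countable ι]

theorem weight_eq_tsum_indicator (S : Set (ℕ × ι)) :
    weight w S = ∑' p, S.indicator (fun p => w p.1) p := by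
  rw [weight, withDensity_apply _ .of_discrete, ← lintegral_indicator .of_discrete,
    lintegral_count]

theorem weight_maximal_union_add_content_le {S S' : Set (ℕ × ι)} (h : T.Covers S E)
    (h' : T.Covers S' E) :
    weight w (T.maximal (S ∪ S')) + T.content w E ≤ weight w S + weight w S' := by
  set U := S ∪ S'
  calc weight w (T.maximal U) + T.content w E
      ≤ weight w (T.maximal U) + (weight w (U \ T.maximal U) + weight w (S ∩ S')) := by
        gcongr
        exact (content_le_weight (h.diff_maximal_union_inter h')).trans (measure_union_le _ _)
    _ = weight w U + weight w (S ∩ S') := by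
        rw [← add_assoc, ← measure_union disjoint_sdiff_right .of_discrete,
          union_sdiff_cancel (maximal_subset U)]
    _ = weight w S + weight w S' := measure_union_add_inter S .of_discrete

end Content

section IncreasingSets

variable (T) in
/-- The families obtained from `Q 0` by successively adding `Q 1`, `Q 2`, … and keeping only the
maximal cells at each stage. -/
def mergedFamily (Q : ℕ → Set (ℕ × ι)) : ℕ → Set (ℕ × ι)
  | 0 => Q 0
  | n + 1 => T.maximal (mergedFamily Q n ∪ Q (n + 1))

variable {Q : ℕ → Set (ℕ × ι)} {E : ℕ → Set X} {w : ℕ → ℝ≥0∞}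

theorem mergedFamily_subset_iUnion (n : ℕ) : T.mergedFamily Q n ⊆ ⋃ i, Q i := by
  induction n with
  | zero => exact subset_iUnion Q 0
  | succ n ih => exact (maximal_subset _).trans (union_subset ih (subset_iUnion Q _))

theorem covers_mergedFamily (hQ : ∀ n, T.Covers (Q n) (E n)) (n : ℕ) :
    T.Covers (T.mergedFamily Q n) (E n) := by
  cases n with
  | zero => exact hQ 0
  | succ n => exact ((hQ (n + 1)).mono subset_union_right subset_rfl).maximal

theorem maximal_iUnion_inter_accumulate_subset_mergedFamily (n : ℕ) :
    T.maximal (⋃ i, Q i) ∩ accumulate Q n ⊆ T.mergedFamily Q n := by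
  induction n with
  | zero => simp [mergedFamily, accumulate]
  | succ n ih =>
    rintro p ⟨hmax, hacc⟩
    rw [accumulate_succ] at hacc
    refine ⟨hacc.imp_left fun h => ih ⟨hmax, h⟩, fun i hi hmem => hmax.2 i hi ?_⟩
    exact union_subset (mergedFamily_subset_iUnion n) (subset_iUnion Q _) hmem

variable [MeasurableSpace ι] [Countable ι] [MeasurableSingletonClass ι]

theorem weight_mergedFamily_le {δ : ℕ → ℝ≥0∞} (hE : Monotone E)
    (hfin : ∀ n, T.content w (E n) ≠ ∞) (hQ : ∀ n, T.Covers (Q n) (E n))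
    (hQw : ∀ n, weight w (Q n) ≤ T.content w (E n) + δ n) (n : ℕ) :
    weight w (T.mergedFamily Q n) ≤ T.content w (E n) + ∑ i ∈ Finset.range (n + 1), δ i := by
  induction n with
  | zero => simpa [mergedFamily] using hQw 0
  | succ n ih =>
    refine (ENNReal.add_le_add_iff_right (hfin n)).1 ?_
    calc weight w (T.mergedFamily Q (n + 1)) + T.content w (E n)
        ≤ weight w (T.mergedFamily Q n) + weight w (Q (n + 1)) :=
          weight_maximal_union_add_content_le (covers_mergedFamily hQ n)
            ((hQ (n + 1)).mono subset_rfl (hE n.le_succ))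
      _ ≤ (T.content w (E n) + ∑ i ∈ Finset.range (n + 1), δ i)
          + (T.content w (E (n + 1)) + δ (n + 1)) := add_le_add ih (hQw _)
      _ = _ := by rw [Finset.sum_range_succ _ (n + 1)]; ring

theorem content_iUnion_le (hE : Monotone E) (hfin : ∀ n, T.content w (E n) ≠ ∞) {c : ℝ≥0∞}
    (hc : ∀ n, T.content w (E n) ≤ c) : T.content w (⋃ n, E n) ≤ c := by
  refine ENNReal.le_of_forall_pos_le_add fun ε hε _ => ?_
  obtain ⟨δ, hδ, hδsum⟩ := ENNReal.exists_pos_sum_of_countable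
    (ENNReal.coe_ne_zero.2 hε.ne') ℕ
  have hcover (n : ℕ) : ∃ S, T.Covers S (E n) ∧ weight w S ≤ T.content w (E n) + δ n := by
    obtain ⟨S, hS⟩ := iInf_lt_iff.1
      (ENNReal.lt_add_right (hfin n) (ENNReal.coe_ne_zero.2 (hδ n).ne'))
    exact ⟨S.1, S.2, hS.le⟩
  choose Q hQ hQw using hcover
  have hcovers : T.Covers (⋃ i, Q i) (⋃ n, E n) := fun x hx => by
    obtain ⟨n, hn⟩ := mem_iUnion.1 hx
    exact (hQ n x hn).imp fun _ hj => mem_iUnion.2 ⟨n, hj⟩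
  have hsplit : T.maximal (⋃ i, Q i) = ⋃ n, T.maximal (⋃ i, Q i) ∩ accumulate Q n := by
    rw [← inter_iUnion, iUnion_accumulate, inter_eq_self_of_subset_left (maximal_subset _)]
  have hmono : Monotone fun n => T.maximal (⋃ i, Q i) ∩ accumulate Q n :=
    fun _ _ h => inter_subset_inter_right _ (monotone_accumulate h)
  calc T.content w (⋃ n, E n) ≤ weight w (T.maximal (⋃ i, Q i)) :=
        content_le_weight hcovers.maximal
    _ = ⨆ n, weight w (T.maximal (⋃ i, Q i) ∩ accumulate Q n) := by
        conv_lhs => rw [hsplit]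
        exact hmono.measure_iUnion
    _ ≤ c + ε := iSup_le fun n => calc
        _ ≤ weight w (T.mergedFamily Q n) :=
          measure_mono (maximal_iUnion_inter_accumulate_subset_mergedFamily n)
        _ ≤ T.content w (E n) + ∑ i ∈ Finset.range (n + 1), (δ i : ℝ≥0∞) :=
          weight_mergedFamily_le hE hfin hQ hQw n
        _ ≤ c + ε := add_le_add (hc n) ((ENNReal.sum_le_tsum _).trans hδsum.le)

end IncreasingSets

end TreeCoding

/-! ### Capacitability of analytic sets -/

theorem exists_forall_prefix {α : Type*} {P : ℕ → (ℕ → α) → Prop}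
    (hcongr : ∀ k b b', (∀ i < k, b i = b' i) → P k b → P k b') {b₀ : ℕ → α} (hzero : P 0 b₀)
    (hsucc : ∀ k b, P k b → ∃ a, P (k + 1) (Function.update b k a)) : ∃ b, ∀ k, P k b := by
  have : Nonempty α := ⟨b₀ 0⟩
  choose! next hnext using hsucc
  let B : ℕ → ℕ → α := fun k => Nat.rec b₀ (fun k b => Function.update b k (next k b)) k
  have hB (k : ℕ) : P k (B k) := by
    induction k with
    | zero => exact hzero
    | succ k ih => exact hnext k _ ih
  have hstable (k i : ℕ) (hi : i < k) : B k i = B (i + 1) i := by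
    induction k with
    | zero => omega
    | succ k ih =>
      obtain rfl | hne := eq_or_ne i k
      · rfl
      · exact (Function.update_of_ne hne _ _).trans (ih (by omega))
  exact ⟨fun i => B (i + 1) i, fun k => hcongr k _ _ (hstable k) (hB k)⟩

/-- The points of Baire space whose first `k` coordinates are bounded by those of `b`. -/
def boundedPrefix (b : ℕ → ℕ) (k : ℕ) : Set (ℕ → ℕ) := {σ | ∀ i < k, σ i ≤ b i}

theorem boundedPrefix_congr {b b' : ℕ → ℕ} {k : ℕ} (h : ∀ i < k, b i = b' i) :
    boundedPrefix b k = boundedPrefix b' k := by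
  ext σ
  exact forall₂_congr fun i hi => by rw [h i hi]

theorem mem_boundedPrefix_update_succ {b σ : ℕ → ℕ} {k n : ℕ} :
    σ ∈ boundedPrefix (Function.update b k n) (k + 1) ↔ σ ∈ boundedPrefix b k ∧ σ k ≤ n := by
  simp only [boundedPrefix, mem_ofPred_eq, Nat.forall_lt_succ_right, Function.update_self]
  exact and_congr_left fun _ => forall₂_congr fun i hi => by rw [Function.update_of_ne hi.ne]

theorem exists_boundedPrefix_image_subset {X : Type*} [TopologicalSpace X] {f : (ℕ → ℕ) → X}
    (hf : Continuous f) {b : ℕ → ℕ} {U : Set X} (hU : IsOpen U)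
    (hsub : f '' univ.pi (fun i => Iic (b i)) ⊆ U) : ∃ k, f '' boundedPrefix b k ⊆ U := by
  by_contra! hcon
  have hescape (k : ℕ) : ∃ σ ∈ boundedPrefix b k, f σ ∉ U := by
    obtain ⟨_, ⟨σ, hσ, rfl⟩, hσU⟩ := not_subset.1 (hcon k)
    exact ⟨σ, hσ, hσU⟩
  choose σ hσ hσU using hescape
  have hcompact : IsCompact (univ.pi fun i => Iic (b i)) :=
    isCompact_univ_pi fun i => (finite_Iic (b i)).isCompact
  obtain ⟨τ, hτ, φ, hφ, hlim⟩ := hcompact.tendsto_subseq (x := fun k i => min (σ k i) (b i))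
    fun _ _ _ => mem_Iic.2 (min_le_right _ _)
  have hσlim : Tendsto (fun k => σ (φ k)) atTop (𝓝 τ) := by
    rw [tendsto_pi_nhds] at hlim ⊢
    intro i
    refine (hlim i).congr' ?_
    filter_upwards [eventually_gt_atTop i] with k hk
    exact min_eq_left (hσ (φ k) i (hk.trans_le (hφ.id_le k)))
  have hfτ : f τ ∈ Uᶜ := hU.isClosed_compl.mem_of_tendsto ((hf.tendsto τ).comp hσlim)
    (Eventually.of_forall fun k => hσU _)
  exact hfτ (hsub ⟨τ, hτ, rfl⟩)

theorem exists_forall_lt_image_boundedPrefix {X : Type*} {Φ : Set X → ℝ≥0∞} {c : ℝ≥0∞}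
    (hΦ : ∀ E : ℕ → Set X, Monotone E → (∀ n, Φ (E n) ≤ c) → Φ (⋃ n, E n) ≤ c)
    {f : (ℕ → ℕ) → X} (hc : c < Φ (range f)) : ∃ b, ∀ k, c < Φ (f '' boundedPrefix b k) := by
  refine exists_forall_prefix (b₀ := 0) (fun k b b' hbb' h => boundedPrefix_congr hbb' ▸ h) ?_ ?_
  · simpa [boundedPrefix] using hc
  intro k b hkb
  by_contra! hle
  have hmono : Monotone fun n => f '' boundedPrefix (Function.update b k n) (k + 1) :=
    fun n m hnm => image_mono fun σ hσ => mem_boundedPrefix_update_succ.2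
      ((mem_boundedPrefix_update_succ.1 hσ).imp_right (le_trans · hnm))
  have hunion : ⋃ n, boundedPrefix (Function.update b k n) (k + 1) = boundedPrefix b k := by
    ext σ
    simp only [mem_iUnion, mem_boundedPrefix_update_succ, exists_and_left, and_iff_left_iff_imp]
    exact fun _ => ⟨σ k, le_rfl⟩
  have hcontra := hΦ _ hmono hle
  rw [← image_iUnion, hunion] at hcontra
  exact hkb.not_ge hcontra

theorem exists_isCompact_forall_open_lt {X : Type*} [TopologicalSpace X] {Φ : Set X → ℝ≥0∞}
    {c : ℝ≥0∞} (hΦ : ∀ E : ℕ → Set X, Monotone E → (∀ n, Φ (E n) ≤ c) → Φ (⋃ n, E n) ≤ c)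
    {E : Set X} (hE : AnalyticSet E) (hc : c < Φ E) :
    ∃ K ⊆ E, IsCompact K ∧ ∀ U, IsOpen U → K ⊆ U → ∃ V ⊆ U ∩ E, c < Φ V := by
  rw [AnalyticSet] at hE
  rcases hE with rfl | ⟨f, hf, rfl⟩
  · exact ⟨∅, subset_rfl, isCompact_empty, fun U _ _ => ⟨∅, empty_subset _, hc⟩⟩
  obtain ⟨b, hb⟩ := exists_forall_lt_image_boundedPrefix hΦ hc
  refine ⟨f '' univ.pi fun i => Iic (b i), image_subset_range _ _,
    (isCompact_univ_pi fun i => (finite_Iic (b i)).isCompact).image hf, fun U hU hKU => ?_⟩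
  obtain ⟨k, hk⟩ := exists_boundedPrefix_image_subset hf hU hKU
  exact ⟨f '' boundedPrefix b k, subset_inter hk (image_subset_range _ _), hb k⟩

/-! ### Measures with prescribed masses on the cells -/

theorem exists_sum_eq_of_le_sum {κ : Type*} {s : Finset κ} {a : ℝ≥0∞} {b : κ → ℝ≥0∞}
    (hb : ∀ c ∈ s, b c ≠ ∞) (h : a ≤ ∑ c ∈ s, b c) :
    ∃ m : κ → ℝ≥0∞, (∀ c, m c ≤ b c) ∧ ∑ c ∈ s, m c = a := by
  refine ⟨fun c => b c * (a / ∑ c ∈ s, b c), fun c => ?_, ?_⟩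
  · exact mul_le_of_le_one_right' (ENNReal.div_le_of_le_mul (by rwa [one_mul]))
  · rw [← Finset.sum_mul]
    rcases eq_or_ne (∑ c ∈ s, b c) 0 with h0 | h0
    · rw [h0, zero_mul, eq_comm, ← nonpos_iff_eq_zero, ← h0]
      exact h
    · exact ENNReal.mul_div_cancel h0 (ENNReal.sum_ne_top.2 hb)

namespace TreeCoding

variable {X ι : Type*} {T : TreeCoding X ι} [MeasurableSpace X]

theorem sum_measure_cell_le {s : Finset ι} {μ : ι → Measure X} {k i : ℕ} (hki : k ≤ i)
    (hμ : ∀ c ∈ s, ∀ᵐ x ∂μ c, x ∈ T.cell k c) {p : ι} {B : ℝ≥0∞}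
    (hB : ∀ c ∈ s, μ c (T.cell i p) ≤ B) : (∑ c ∈ s, μ c) (T.cell i p) ≤ B := by
  classical
  have hzero : ∀ c ∈ s, c ≠ T.parent^[i - k] p → μ c (T.cell i p) = 0 := by
    intro c hc hne
    refine measure_mono_null (t := {x | x ∉ T.cell k c}) (fun x hx hxc => hne ?_) (hμ c hc)
    rw [← show T.code k x = c from hxc, ← iterate_parent_code hki x,
      show T.code i x = p from hx]
  rw [Measure.finsetSum_apply]
  by_cases hmem : T.parent^[i - k] p ∈ s
  · rw [Finset.sum_eq_single_of_mem _ hmem hzero]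
    exact hB _ hmem
  · rw [Finset.sum_eq_zero fun c hc => hzero c hc (ne_of_mem_of_not_mem hc hmem)]
    exact zero_le

variable [MeasurableSingletonClass X] [MeasurableSpace ι] [MeasurableSingletonClass ι]
  {w : ℕ → ℝ≥0∞} {V : Set X} {κ : ℝ≥0∞}

theorem exists_measure_of_le_content (hκ : κ ≠ ∞) (hw : ∀ j, w j ≠ ∞) (n j : ℕ) (q : ι)
    {M : ℝ≥0∞} (hM : M ≤ κ * T.content w (V ∩ T.cell j q)) :
    ∃ μ : Measure X, (∀ᵐ x ∂μ, x ∈ V ∩ T.cell j q) ∧ μ univ = M ∧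
      ∀ i ∈ Icc j (j + n), ∀ c, μ (T.cell i c) ≤ κ * w i := by
  classical
  have hMw {j : ℕ} {q : ι} {M : ℝ≥0∞} (hM : M ≤ κ * T.content w (V ∩ T.cell j q)) :
      M ≤ κ * w j := hM.trans (by gcongr; exact content_inter_cell_le j q)
  induction n generalizing j q M with
  | zero =>
    simp only [add_zero, Icc_self, mem_singleton_iff, forall_eq]
    rcases (V ∩ T.cell j q).eq_empty_or_nonempty with hempty | ⟨x, hx⟩
    · rw [hempty, content_empty, mul_zero, nonpos_iff_eq_zero] at hM
      exact ⟨0, by simp, by simp [hM], by simp⟩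
    · refine ⟨M • Measure.dirac x, Measure.ae_smul_measure ?_ M, by simp, fun c => ?_⟩
      · rwa [ae_dirac_eq]
      · exact (measure_mono (subset_univ _)).trans (by simpa using hMw hM)
  | succ n ih =>
    have hsplit : M ≤ ∑ c ∈ T.children j q, κ * T.content w (V ∩ T.cell (j + 1) c) := by
      rw [← Finset.mul_sum]
      exact hM.trans (by gcongr; exact content_inter_cell_le_sum_children j q)
    obtain ⟨m, hm, hmsum⟩ := exists_sum_eq_of_le_sum
      (fun c _ => ENNReal.mul_ne_top hκ (ne_top_of_le_ne_top (hw _) (content_inter_cell_le _ _)))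
      hsplit
    choose μ hμV hμ hμcell using fun c => ih (j + 1) c (hm c)
    have huniv : (∑ c ∈ T.children j q, μ c) univ = M := by
      simp only [Measure.finsetSum_apply, hμ, hmsum]
    refine ⟨∑ c ∈ T.children j q, μ c, ?_, huniv, fun i hi c => ?_⟩
    · rw [ae_finsetSum_measure_iff]
      intro c hc
      filter_upwards [hμV c] with x hx
      exact ⟨hx.1, (T.parent_code_succ j x).symm.trans <|
        (congrArg T.parent hx.2).trans (Finset.mem_filter.1 hc).2⟩
    · obtain rfl | hji := eq_or_lt_of_le hi.1
      · exact (measure_mono (subset_univ _)).trans (huniv.trans_le (hMw hM))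
      · exact sum_measure_cell_le hji (fun c _ => (hμV c).mono fun x hx => hx.2)
          fun c' _ => hμcell c' i ⟨hji, by have := hi.2; omega⟩ c

theorem exists_measure_of_forall_le_content (hκ : κ ≠ ∞) (hw : ∀ j, w j ≠ ∞) (k n : ℕ)
    {G : Finset ι} {m : ℝ≥0∞} (hm : ∀ q ∈ G, m ≤ κ * T.content w (V ∩ T.cell k q)) :
    ∃ μ : Measure X, (∀ᵐ x ∂μ, x ∈ V) ∧ μ univ = G.card * m ∧ (∀ q ∈ G, m ≤ μ (T.cell k q)) ∧
      ∀ i ∈ Icc k (k + n), ∀ c, μ (T.cell i c) ≤ κ * w i := by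
  choose! μ hμV hμ hμcell using fun q hq => exists_measure_of_le_content hκ hw n k q (hm q hq)
  have hμk (q : ι) (hq : q ∈ G) : ∀ᵐ x ∂μ q, x ∈ T.cell k q := (hμV q hq).mono fun x hx => hx.2
  refine ⟨∑ q ∈ G, μ q, ?_, ?_, fun q hq => ?_, fun i hi c => ?_⟩
  · exact ae_finsetSum_measure_iff.2 fun q hq => (hμV q hq).mono fun x hx => hx.1
  · rw [Measure.finsetSum_apply, Finset.sum_congr rfl hμ, Finset.sum_const, nsmul_eq_mul]
  · calc m = μ q (T.cell k q) :=
          (hμ q hq).symm.trans (measure_congr (eventuallyEq_univ.2 (hμk q hq)).symm)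
      _ ≤ (∑ q ∈ G, μ q) (T.cell k q) := by
          rw [Measure.finsetSum_apply]
          exact Finset.single_le_sum (f := fun p => μ p (T.cell k q)) (fun _ _ => zero_le) hq
  · exact sum_measure_cell_le hi.1 hμk fun q hq => hμcell q hq i hi c

end TreeCoding

/-! ### Dyadic cubes -/

/-- The dyadic subdivision of the unit cube: the cell with label `m` in generation `j` is the part
in the unit cube of the cube `2^{-j}(m + [0,1)^d)`, except that the floors are truncated at
`2^j - 1` so that the faces `x i = 1` belong to the outermost cells. -/
def dyadicTree (d : ℕ) : TreeCoding (Euc d) (Fin d → ℕ) where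
  code j x i := min ⌊(2 : ℝ) ^ j * x i⌋₊ (2 ^ j - 1)
  parent m i := m i / 2
  level j := Fintype.piFinset fun _ => Finset.range (2 ^ j)
  parent_code_succ j x := by
    funext i
    have hfloor : ⌊(2 : ℝ) ^ j * x i⌋₊ = ⌊(2 : ℝ) ^ (j + 1) * x i⌋₊ / 2 := by
      rw [← Nat.floor_div_ofNat, pow_succ, mul_right_comm]
      simp
    have hpos : 0 < 2 ^ j := Nat.two_pow_pos j
    simp only [hfloor]
    omega
  code_mem_level j x := by
    simp only [Fintype.mem_piFinset, Finset.mem_range]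
    intro i
    have hpos : 0 < 2 ^ j := Nat.two_pow_pos j
    omega

section Dyadic

variable {d : ℕ}

theorem measurable_dyadicTree_code (j : ℕ) : Measurable ((dyadicTree d).code j) := by
  refine measurable_pi_lambda _ fun i => ?_
  have hcoord : Measurable fun x : Euc d => (2 : ℝ) ^ j * x i := by fun_prop
  exact (Nat.measurable_floor.comp hcoord).min measurable_const

theorem card_dyadicTree_level (j : ℕ) : ((dyadicTree d).level j).card = 2 ^ (j * d) := by
  simp [dyadicTree, pow_mul]

theorem mul_mem_Icc_dyadicTree_code (j : ℕ) {x : Euc d} (hx : x ∈ unitCube d) (i : Fin d) :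
    2 ^ j * x i ∈ Icc ((dyadicTree d).code j x i : ℝ) ((dyadicTree d).code j x i + 1) := by
  obtain ⟨h0, h1⟩ := hx i
  have hpos : (0 : ℝ) < 2 ^ j := by positivity
  constructor
  · exact (Nat.cast_le.2 (min_le_left _ _)).trans (Nat.floor_le (by positivity))
  · rcases le_total ⌊(2 : ℝ) ^ j * x i⌋₊ (2 ^ j - 1) with h | h
    · simpa [dyadicTree, min_eq_left h] using (Nat.lt_floor_add_one _).le
    · have hone : 1 ≤ 2 ^ j := Nat.one_le_two_pow
      simp only [dyadicTree, min_eq_right h]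
      push_cast [Nat.cast_sub hone]
      nlinarith

/-- The weight `ℓ^s` of a cube of side length `ℓ = 2^{-j}`. -/
def cubeWeight (s : ℝ) (j : ℕ) : ℝ≥0∞ := ENNReal.ofReal (((2 : ℝ) ^ (-(j : ℤ))) ^ s)

theorem cubeWeight_ne_top (s : ℝ) (j : ℕ) : cubeWeight s j ≠ ∞ := ENNReal.ofReal_ne_top

theorem cubeWeight_anti {s s' : ℝ} (h : s ≤ s') (j : ℕ) : cubeWeight s' j ≤ cubeWeight s j :=
  ENNReal.ofReal_le_ofReal <| Real.rpow_le_rpow_of_exponent_ge (by positivity)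
    (zpow_le_one_of_nonpos₀ one_le_two (by simp)) h

theorem cubeWeight_sub (ε : ℝ) (j : ℕ) :
    cubeWeight (d - ε) j = ENNReal.ofReal ((2 : ℝ) ^ (j * ε) / 2 ^ (j * d)) := by
  rw [cubeWeight, ← Real.rpow_intCast, ← Real.rpow_mul zero_le_two, ← Real.rpow_natCast 2 (j * d),
    ← Real.rpow_sub two_pos]
  congr 2
  push_cast
  ring

theorem tendsto_cubeWeight {s : ℝ} (hs : 0 < s) : Tendsto (cubeWeight s) atTop (𝓝 0) := by
  have hside : Tendsto (fun j : ℕ => (2 : ℝ) ^ (-(j : ℤ))) atTop (𝓝 0) := by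
    simpa [Function.comp_def] using
      tendsto_inv_atTop_zero.comp (tendsto_pow_atTop_atTop_of_one_lt (one_lt_two (α := ℝ)))
  have hpow := hside.rpow_const (p := s) (.inr hs.le)
  rw [Real.zero_rpow hs.ne'] at hpow
  rw [← ENNReal.ofReal_zero]
  exact ENNReal.tendsto_ofReal hpow

theorem dyadicContent_le_tsum {κ : Type*} [Denumerable κ] {s : ℝ} {E : Set (Euc d)}
    {Q : κ → Set (Euc d)} {l : κ → ℝ} (hQ : ∀ p, IsDyadicCube (Q p) (l p)) (hE : E ⊆ ⋃ p, Q p) :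
    dyadicContent s E ≤ ∑' p, ENNReal.ofReal (l p ^ s) := by
  let e : ℕ ≃ κ := (Denumerable.eqv κ).symm
  rw [← e.tsum_eq fun p => ENNReal.ofReal (l p ^ s)]
  refine iInf₂_le_of_le (Q ∘ e) (l ∘ e) (iInf₂_le_of_le (fun i => hQ (e i)) ?_ le_rfl)
  rwa [show ⋃ i, (Q ∘ e) i = ⋃ p, Q p from e.surjective.iUnion_comp Q]

theorem exists_isDyadicCube (j : ℕ) (m : Fin d → ℕ) :
    ∃ Q : Set (Euc d), IsDyadicCube Q ((2 : ℝ) ^ (-(j : ℤ))) ∧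
      unitCube d ∩ (dyadicTree d).cell j m ⊆ Q := by
  refine ⟨_, ⟨j, fun i => m i, rfl, rfl⟩, ?_⟩
  rintro x ⟨hx, rfl⟩ i
  have hpos : (0 : ℝ) < 2 ^ j := by positivity
  obtain ⟨h1, h2⟩ := mul_mem_Icc_dyadicTree_code j hx i
  rw [zpow_neg, zpow_natCast, ← div_eq_mul_inv, ← div_eq_mul_inv, div_le_iff₀' hpos,
    le_div_iff₀' hpos]
  exact ⟨by simpa using h1, by simpa using h2⟩

/-- Labels outside the covering family are given arbitrarily small cubes, because `dyadicContent`
only allows infinite sequences of (nonempty) cubes. -/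
theorem dyadicContent_le_content {s s₀ : ℝ} (hs : 0 < s) (hs₀ : s₀ ≤ s) {E : Set (Euc d)}
    (hE : E ⊆ unitCube d) : dyadicContent s E ≤ (dyadicTree d).content (cubeWeight s₀) E := by
  classical
  refine le_iInf fun S => ENNReal.le_of_forall_pos_le_add fun ε hε _ => ?_
  have : Denumerable (ℕ × (Fin d → ℕ)) := Classical.choice (nonempty_denumerable _)
  obtain ⟨δ, hδ, hδsum⟩ := ENNReal.exists_pos_sum_of_countable
    (ENNReal.coe_ne_zero.2 hε.ne') (ℕ × (Fin d → ℕ))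
  have hsmall (p : ℕ × (Fin d → ℕ)) : ∃ N, cubeWeight s N < δ p :=
    ((tendsto_cubeWeight hs).eventually_lt_const (ENNReal.coe_pos.2 (hδ p))).exists
  choose N hN using hsmall
  let gen : ℕ × (Fin d → ℕ) → ℕ := fun p => if p ∈ S.1 then p.1 else N p
  choose Q hQ hcell using fun p : ℕ × (Fin d → ℕ) => exists_isDyadicCube (gen p) p.2
  have hcover : E ⊆ ⋃ p, Q p := fun x hx => by
    obtain ⟨j, hj⟩ := S.2 x hx
    refine mem_iUnion.2 ⟨_, hcell (j, (dyadicTree d).code j x) ⟨hE hx, ?_⟩⟩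
    simp only [gen, hj, if_true]
    rfl
  have hcost (p : ℕ × (Fin d → ℕ)) :
      cubeWeight s (gen p) ≤ S.1.indicator (fun p => cubeWeight s₀ p.1) p + δ p := by
    by_cases hp : p ∈ S.1
    · simpa [gen, hp] using (cubeWeight_anti hs₀ p.1).trans le_self_add
    · simpa [gen, hp] using (hN p).le
  calc dyadicContent s E ≤ ∑' p, cubeWeight s (gen p) := dyadicContent_le_tsum hQ hcover
    _ ≤ ∑' p, (S.1.indicator (fun p => cubeWeight s₀ p.1) p + δ p) := ENNReal.tsum_le_tsum hcost
    _ ≤ TreeCoding.weight (cubeWeight s₀) S.1 + ε := by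
        rw [ENNReal.tsum_add, TreeCoding.weight_eq_tsum_indicator]
        gcongr

theorem content_dyadicTree_ne_top (s : ℝ) (E : Set (Euc d)) :
    (dyadicTree d).content (cubeWeight s) E ≠ ∞ :=
  ne_top_of_le_ne_top (ENNReal.sum_ne_top.2 fun _ _ => ne_top_of_le_ne_top (cubeWeight_ne_top s 0)
    (TreeCoding.content_inter_cell_le 0 _)) (TreeCoding.content_le_sum_level 0)

theorem le_card_heavyCells {ε ρ : ℝ} (hρ : 0 < ρ) (hρ1 : ρ < 1) {k : ℕ}
    (hk : (1 - ρ) * (2 : ℝ) ^ (k * ε) ≤ 1) {V : Set (Euc d)}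
    (hV : ENNReal.ofReal (1 - ρ) < (dyadicTree d).content (cubeWeight (d - ε)) V) :
    (1 - 3 * ρ) * 2 ^ (k * d) ≤
      ((dyadicTree d).heavyCells (cubeWeight (d - ε)) (ENNReal.ofReal ρ) V k).card := by
  set G := (dyadicTree d).heavyCells (cubeWeight (d - ε)) (ENNReal.ofReal ρ) V k
  have hD : (0 : ℝ) < 2 ^ (k * d) := by positivity
  have hcount : 1 - ρ < (G.card + ρ * 2 ^ (k * d)) * ((2 : ℝ) ^ (k * ε) / 2 ^ (k * d)) := by
    refine (ENNReal.ofReal_lt_ofReal_iff_of_nonneg (by linarith)).1 (hV.trans_le ?_)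
    refine (TreeCoding.content_le_card_heavyCells_add (ENNReal.ofReal ρ) k).trans_eq ?_
    rw [card_dyadicTree_level, cubeWeight_sub, ENNReal.ofReal_mul (by positivity),
      ENNReal.ofReal_add (by positivity) (by positivity), ENNReal.ofReal_mul hρ.le,
      mul_comm (ENNReal.ofReal ρ)]
    simp [G]
  have hG : 0 ≤ G.card + ρ * 2 ^ (k * d) := by positivity
  have hsq : (1 - ρ) * ((1 - ρ) * 2 ^ (k * d)) ≤ G.card + ρ * 2 ^ (k * d) := by
    rw [← mul_div_assoc, lt_div_iff₀ hD] at hcount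
    calc (1 - ρ) * ((1 - ρ) * 2 ^ (k * d))
        ≤ (1 - ρ) * ((G.card + ρ * 2 ^ (k * d)) * (2 : ℝ) ^ (k * ε)) :=
          mul_le_mul_of_nonneg_left hcount.le (by linarith)
      _ = (G.card + ρ * 2 ^ (k * d)) * ((1 - ρ) * (2 : ℝ) ^ (k * ε)) := by ring
      _ ≤ G.card + ρ * 2 ^ (k * d) := mul_le_of_le_one_right hG hk
  nlinarith [mul_nonneg (sq_nonneg ρ) hD.le]

theorem exists_measure_dyadicTree_cell {ε ρ : ℝ} (hε : 0 ≤ ε) (hρ : 0 < ρ) (hρ1 : ρ < 1)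
    {k : ℕ} (hk : (1 - ρ) * (2 : ℝ) ^ (k * ε) ≤ 1) (n : ℕ) {V : Set (Euc d)}
    (hV : ENNReal.ofReal (1 - ρ) < (dyadicTree d).content (cubeWeight (d - ε)) V) :
    ∃ μ : Measure (Euc d), (∀ᵐ x ∂μ, x ∈ V) ∧ μ univ ≤ 1 ∧
      (∃ G ⊆ (dyadicTree d).level k, (1 - 3 * ρ) * 2 ^ (k * d) ≤ (G.card : ℝ) ∧
        ∀ q ∈ G, ENNReal.ofReal (1 / 2 ^ (k * d)) ≤ μ ((dyadicTree d).cell k q)) ∧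
      ∀ j ∈ Icc k (k + n), ∀ q, μ ((dyadicTree d).cell j q) ≤
        ENNReal.ofReal (ρ⁻¹ * ((2 : ℝ) ^ (j * ε) / 2 ^ (j * d))) := by
  set w := cubeWeight (d - ε)
  set G := (dyadicTree d).heavyCells w (ENNReal.ofReal ρ) V k
  have hGlevel : G ⊆ (dyadicTree d).level k := Finset.filter_subset _ _
  have hm : ∀ q ∈ G, ENNReal.ofReal (1 / 2 ^ (k * d)) ≤
      ENNReal.ofReal ρ⁻¹ * (dyadicTree d).content w (V ∩ (dyadicTree d).cell k q) := by
    intro q hq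
    calc ENNReal.ofReal (1 / 2 ^ (k * d)) ≤ ENNReal.ofReal ρ⁻¹ * (ENNReal.ofReal ρ * w k) := by
          rw [show w k = _ from cubeWeight_sub ε k, ← mul_assoc,
            ← ENNReal.ofReal_mul (by positivity), inv_mul_cancel₀ hρ.ne', ENNReal.ofReal_one,
            one_mul]
          gcongr
          exact Real.one_le_rpow one_le_two (by positivity)
      _ ≤ _ := by gcongr; exact (Finset.mem_filter.1 hq).2
  obtain ⟨μ, hμV, huniv, hG, hcell⟩ := TreeCoding.exists_measure_of_forall_le_content
    ENNReal.ofReal_ne_top (cubeWeight_ne_top _) k n hm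
  refine ⟨μ, hμV, ?_, ⟨G, hGlevel, le_card_heavyCells hρ hρ1 hk hV, hG⟩, fun j hj q => ?_⟩
  · have hcard : (G.card : ℝ≥0∞) ≤ 2 ^ (k * d) := by
      exact_mod_cast (Finset.card_le_card hGlevel).trans_eq (card_dyadicTree_level k)
    calc μ univ = G.card * ENNReal.ofReal (1 / 2 ^ (k * d)) := huniv
      _ ≤ 2 ^ (k * d) * (2 ^ (k * d))⁻¹ := by
          rw [one_div, ENNReal.ofReal_inv_of_pos (by positivity)]
          gcongr
          simp
      _ ≤ 1 := ENNReal.mul_inv_le_one _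
  · rw [ENNReal.ofReal_mul (by positivity), ← cubeWeight_sub]
    exact hcell j hj q

end Dyadic

/-! ### Oscillatory integrals over the circle -/

section Oscillatory

open Complex (I)
open scoped Real

/-- The first-derivative test of van der Corput. Integration by parts moves the derivative from
`exp (i r φ)` to `g = 1 / φ'`, which is monotone. -/
theorem abs_mul_norm_integral_exp_le {a b : ℝ} (hab : a ≤ b) {φ φ' g g' : ℝ → ℝ}
    (hφ : ∀ x ∈ uIcc a b, HasDerivAt φ (φ' x) x) (hg : ∀ x ∈ uIcc a b, HasDerivAt g (g' x) x)
    (hφ' : ContinuousOn φ' (uIcc a b)) (hg' : ContinuousOn g' (uIcc a b))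
    (hgφ : ∀ x ∈ uIcc a b, g x * φ' x = 1) (hg'_nonneg : ∀ x ∈ Ioc a b, 0 ≤ g' x) (r : ℝ) :
    |r| * ‖∫ x in a..b, Complex.exp ((r * φ x : ℝ) * I)‖ ≤ |g a| + |g b| + (g b - g a) := by
  set e : ℝ → ℂ := fun x => Complex.exp ((r * φ x : ℝ) * I)
  have he (x : ℝ) : ‖e x‖ = 1 := Complex.norm_exp_ofReal_mul_I _
  have hderiv : ∀ x ∈ uIcc a b, HasDerivAt e (e x * ((r * φ' x : ℝ) * I)) x := fun x hx =>
    (((hφ x hx).const_mul r).ofReal_comp.mul_const I).cexp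
  have hecont : ContinuousOn e (uIcc a b) := fun x hx =>
    (hderiv x hx).continuousAt.continuousWithinAt
  have hparts := intervalIntegral.integral_mul_deriv_eq_deriv_mul
    (fun x hx => (hg x hx).ofReal_comp) hderiv
    (Complex.continuous_ofReal.comp_continuousOn hg').intervalIntegrable
    (hecont.mul (by fun_prop)).intervalIntegrable
  have hlhs : ∫ x in a..b, (g x : ℂ) * (e x * ((r * φ' x : ℝ) * I)) =
      (r * I) * ∫ x in a..b, e x := by
    rw [← intervalIntegral.integral_const_mul]
    refine intervalIntegral.integral_congr fun x hx => ?_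
    have hone : (g x : ℂ) * φ' x = 1 := by exact_mod_cast hgφ x hx
    push_cast
    linear_combination r * I * e x * hone
  have hrest : ‖∫ x in a..b, (g' x : ℂ) * e x‖ ≤ g b - g a := by
    rw [← intervalIntegral.integral_eq_sub_of_hasDerivAt hg hg'.intervalIntegrable]
    refine intervalIntegral.norm_integral_le_of_norm_le hab (ae_of_all _ fun x hx => ?_)
      hg'.intervalIntegrable
    rw [norm_mul, he, mul_one, Complex.norm_real, Real.norm_of_nonneg (hg'_nonneg x hx)]
  have hboundary : ‖(g b : ℂ) * e b - g a * e a‖ ≤ |g a| + |g b| := by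
    refine (norm_sub_le _ _).trans_eq ?_
    simp only [norm_mul, he, mul_one, Complex.norm_real, Real.norm_eq_abs, add_comm]
  calc |r| * ‖∫ x in a..b, e x‖ = ‖(r * I) * ∫ x in a..b, e x‖ := by simp
    _ ≤ |g a| + |g b| + (g b - g a) := by
        rw [← hlhs, hparts]
        exact (norm_sub_le _ _).trans (add_le_add hboundary hrest)

/-- The phase integral of `exp (i r cos α)` over an arc of the circle. -/
def arcIntegral (a b r : ℝ) : ℂ := ∫ α in a..b, Complex.exp ((r * Real.cos α : ℝ) * I)

theorem arcIntegral_add (a b c r : ℝ) :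
    arcIntegral a b r + arcIntegral b c r = arcIntegral a c r := by
  have hcont : Continuous fun α : ℝ => Complex.exp ((r * Real.cos α : ℝ) * I) := by fun_prop
  exact intervalIntegral.integral_add_adjacent_intervals (hcont.intervalIntegrable _ _)
    (hcont.intervalIntegrable _ _)

theorem norm_arcIntegral_le {a b : ℝ} (hab : a ≤ b) (r : ℝ) : ‖arcIntegral a b r‖ ≤ b - a := by
  simpa [arcIntegral, abs_of_nonneg (sub_nonneg.2 hab)] using
    intervalIntegral.norm_integral_le_of_norm_le_const (a := a) (b := b)
      (f := fun α : ℝ => Complex.exp ((r * Real.cos α : ℝ) * I))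
      fun α _ => (Complex.norm_exp_ofReal_mul_I _).le

theorem abs_mul_norm_arcIntegral_le {κ : ℝ} (hκ : 0 < κ) (hκ' : κ ≤ π / 2) (r : ℝ) :
    |r| * ‖arcIntegral κ (π / 2) r‖ ≤ π / κ := by
  have hsin : ∀ α ∈ uIcc κ (π / 2), 0 < Real.sin α := fun α hα => by
    rw [uIcc_of_le hκ'] at hα
    exact Real.sin_pos_of_pos_of_lt_pi (hκ.trans_le hα.1) (by linarith [hα.2, Real.pi_pos])
  have hsinκ := hsin κ left_mem_uIcc
  have hvdc := abs_mul_norm_integral_exp_le hκ' (φ := Real.cos) (φ' := fun α => -Real.sin α)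
    (g := fun α => -(Real.sin α)⁻¹) (g' := fun α => -(-Real.cos α / Real.sin α ^ 2))
    (fun α _ => Real.hasDerivAt_cos α)
    (fun α hα => ((Real.hasDerivAt_sin α).inv (hsin α hα).ne').neg) (by fun_prop)
    (ContinuousOn.div (by fun_prop) (by fun_prop) fun α hα => pow_ne_zero _ (hsin α hα).ne').neg
    (fun α hα => by field_simp [(hsin α hα).ne'])
    (fun α hα => by
      rw [neg_div, neg_neg]
      exact div_nonneg (Real.cos_nonneg_of_neg_pi_div_two_le_of_le
        (by linarith [hα.1, Real.pi_pos]) hα.2) (sq_nonneg _)) r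
  calc |r| * ‖arcIntegral κ (π / 2) r‖ ≤ 2 * (Real.sin κ)⁻¹ := by
        refine hvdc.trans_eq ?_
        rw [Real.sin_pi_div_two, abs_neg, abs_neg, abs_of_pos (inv_pos.2 hsinκ)]
        norm_num
        ring
    _ ≤ 2 * (2 / π * κ)⁻¹ := by gcongr; exact Real.mul_le_sin hκ.le hκ'
    _ = π / κ := by field_simp

theorem norm_arcIntegral_quarter_mul_sqrt_le (r : ℝ) :
    ‖arcIntegral 0 (π / 2) r‖ * √|r| ≤ 5 := by
  have hpi := Real.pi_lt_four
  rcases le_or_gt |r| 1 with hr | hr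
  · calc ‖arcIntegral 0 (π / 2) r‖ * √|r| ≤ (π / 2 - 0) * 1 := by
          have hquarter : (0 : ℝ) ≤ π / 2 := by positivity
          exact mul_le_mul (norm_arcIntegral_le hquarter r) (Real.sqrt_le_one.2 hr)
            (Real.sqrt_nonneg _) (by simpa using hquarter)
      _ ≤ 5 := by linarith
  · have hq : 1 ≤ √|r| := Real.one_le_sqrt.2 hr.le
    have hq0 : 0 < √|r| := by positivity
    have hqq : √|r| * √|r| = |r| := Real.mul_self_sqrt (abs_nonneg r)
    have hnear := norm_arcIntegral_le (inv_pos.2 hq0).le r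
    have hfar := abs_mul_norm_arcIntegral_le (inv_pos.2 hq0)
      ((inv_le_one_of_one_le₀ hq).trans (by linarith [Real.pi_gt_three])) r
    have hfar' : √|r| * (√|r| * ‖arcIntegral (√|r|)⁻¹ (π / 2) r‖) ≤ √|r| * π := by
      rwa [← mul_assoc, hqq, mul_comm √|r| π, ← div_inv_eq_mul π]
    calc ‖arcIntegral 0 (π / 2) r‖ * √|r|
        ≤ (‖arcIntegral 0 (√|r|)⁻¹ r‖ + ‖arcIntegral (√|r|)⁻¹ (π / 2) r‖) * √|r| := by
          rw [← arcIntegral_add 0 (√|r|)⁻¹]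
          gcongr
          exact norm_add_le _ _
      _ ≤ (√|r|)⁻¹ * √|r| + π := by
          rw [add_mul, mul_comm ‖arcIntegral _ (π / 2) r‖]
          gcongr
          · simpa using hnear
          · exact le_of_mul_le_mul_left hfar' hq0
      _ ≤ 5 := by rw [inv_mul_cancel₀ hq0.ne']; linarith

theorem arcIntegral_half_eq (r : ℝ) :
    arcIntegral 0 π r = arcIntegral 0 (π / 2) r + arcIntegral 0 (π / 2) (-r) := by
  have hreflect := intervalIntegral.integral_comp_sub_left (a := π / 2) (b := π)
    (fun α : ℝ => Complex.exp ((-r * Real.cos α : ℝ) * I)) π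
  simp only [Real.cos_pi_sub, neg_mul_neg, sub_self, sub_half] at hreflect
  rw [← arcIntegral_add 0 (π / 2)]
  exact congrArg _ hreflect

theorem arcIntegral_full_eq (r : ℝ) :
    arcIntegral 0 (2 * π) r = arcIntegral 0 π r + arcIntegral 0 π (-r) := by
  have hshift := intervalIntegral.integral_comp_sub_right (a := π) (b := 2 * π)
    (fun α : ℝ => Complex.exp ((-r * Real.cos α : ℝ) * I)) π
  simp only [Real.cos_sub_pi, neg_mul_neg, sub_self, two_mul, add_sub_cancel_right] at hshift
  rw [← arcIntegral_add 0 π, two_mul]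
  exact congrArg _ hshift

theorem norm_arcIntegral_full_mul_sqrt_le (r : ℝ) :
    ‖arcIntegral 0 (2 * π) r‖ * √|r| ≤ 20 := by
  have hpos := norm_arcIntegral_quarter_mul_sqrt_le r
  have hneg := norm_arcIntegral_quarter_mul_sqrt_le (-r)
  rw [abs_neg] at hneg
  set u := arcIntegral 0 (π / 2) r
  set v := arcIntegral 0 (π / 2) (-r)
  calc ‖arcIntegral 0 (2 * π) r‖ * √|r| = ‖(u + v) + (v + u)‖ * √|r| := by
        rw [arcIntegral_full_eq, arcIntegral_half_eq, arcIntegral_half_eq, neg_neg]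
    _ ≤ ((‖u‖ + ‖v‖) + (‖v‖ + ‖u‖)) * √|r| := by
        gcongr
        exact (norm_add_le _ _).trans (add_le_add (norm_add_le _ _) (norm_add_le _ _))
    _ ≤ 20 := by linarith

theorem integral_exp_cos_mul_add_sin_mul (a b : ℝ) :
    ∫ α in (0 : ℝ)..2 * π, Complex.exp ((Real.cos α * a + Real.sin α * b : ℝ) * I) =
      arcIntegral 0 (2 * π) √(a ^ 2 + b ^ 2) := by
  set z : ℂ := ⟨a, b⟩
  have hz : √(a ^ 2 + b ^ 2) = ‖z‖ := by
    rw [Complex.norm_def, Complex.normSq_apply, pow_two, pow_two]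
  have hphase (α : ℝ) :
      Real.cos α * a + Real.sin α * b = ‖z‖ * Real.cos (α - Complex.arg z) := by
    rw [Real.cos_sub]
    linear_combination -Real.cos α * Complex.norm_mul_cos_arg z
      - Real.sin α * Complex.norm_mul_sin_arg z
  have hperiodic : Function.Periodic
      (fun α : ℝ => Complex.exp ((‖z‖ * Real.cos α : ℝ) * I)) (2 * π) := fun α => by
    simp only [Real.cos_add_two_pi]
  have hrotate := hperiodic.intervalIntegral_add_eq (0 - Complex.arg z) 0
  rw [zero_add, sub_add_eq_add_sub, zero_add] at hrotate
  simp only [hphase]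
  rw [intervalIntegral.integral_comp_sub_right
    (fun α : ℝ => Complex.exp ((‖z‖ * Real.cos α : ℝ) * I)), hrotate, hz]
  rfl

theorem norm_integral_exp_cos_mul_add_sin_mul_le (a b : ℝ) :
    ‖∫ α in (0 : ℝ)..2 * π, Complex.exp ((Real.cos α * a + Real.sin α * b : ℝ) * I)‖ *
      √√(a ^ 2 + b ^ 2) ≤ 20 := by
  have h := norm_arcIntegral_full_mul_sqrt_le √(a ^ 2 + b ^ 2)
  rwa [abs_of_nonneg (Real.sqrt_nonneg _), ← integral_exp_cos_mul_add_sin_mul] at h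

theorem intervalIntegrable_inv_sqrt_sin_quarter :
    IntervalIntegrable (fun α : ℝ => (√|Real.sin α|)⁻¹) volume 0 (π / 2) := by
  have hrpow : IntervalIntegrable (fun α : ℝ => (2 / π * α) ^ (-(1 / 2) : ℝ)) volume 0
      (π / 2) := by
    have h := (intervalIntegral.intervalIntegrable_rpow' (a := 0) (b := 1)
      (show (-1 : ℝ) < -(1 / 2) by norm_num)).comp_mul_left (c := 2 / π)
    simpa using h
  refine hrpow.mono_fun (by fun_prop) ?_
  refine (ae_restrict_iff' measurableSet_uIoc).2 (ae_of_all _ fun α hα => ?_)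
  rw [uIoc_of_le (by positivity)] at hα
  have hα0 : 0 < 2 / π * α := mul_pos (by positivity) hα.1
  beta_reduce
  rw [Real.rpow_neg hα0.le, ← Real.sqrt_eq_rpow, Real.norm_of_nonneg (by positivity),
    Real.norm_of_nonneg (by positivity)]
  gcongr
  exact (Real.mul_le_sin hα.1.le hα.2).trans (le_abs_self _)

theorem intervalIntegrable_inv_sqrt_cos (a b : ℝ) :
    IntervalIntegrable (fun α : ℝ => (√|Real.cos α|)⁻¹) volume a b := by
  have hright : IntervalIntegrable (fun α : ℝ => (√|Real.cos α|)⁻¹) volume 0 (π / 2) := by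
    simpa [Real.sin_pi_div_two_sub] using
      (intervalIntegrable_inv_sqrt_sin_quarter.comp_sub_left (π / 2)).symm
  have hleft : IntervalIntegrable (fun α : ℝ => (√|Real.cos α|)⁻¹) volume (-(π / 2)) 0 := by
    simpa using (hright.comp_sub_left 0).symm
  have hperiodic : Function.Periodic (fun α : ℝ => (√|Real.cos α|)⁻¹) π := fun α => by
    simp [Real.cos_add_pi]
  refine hperiodic.intervalIntegrable Real.pi_pos.ne' (t := -(π / 2)) ?_ a b
  rw [neg_add_eq_sub, sub_half]
  exact hleft.trans hright

end Oscillatory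

/-! ### A measure on the unit sphere with decaying characteristic function -/

section SphereMeasure

open Complex (I)
open scoped Real

/-- The uniform probability measure on one period of angles. -/
def uniformAngle : Measure ℝ := ENNReal.ofReal (2 * π)⁻¹ • volume.restrict (Ioc 0 (2 * π))

instance : IsProbabilityMeasure uniformAngle where
  measure_univ := by
    rw [uniformAngle, Measure.smul_apply, Measure.restrict_apply_univ, Real.volume_Ioc, sub_zero,
      smul_eq_mul, ← ENNReal.ofReal_mul (by positivity), inv_mul_cancel₀ (by positivity),
      ENNReal.ofReal_one]

theorem integral_uniformAngle (f : ℝ → ℂ) :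
    ∫ α, f α ∂uniformAngle = (2 * π)⁻¹ • ∫ α in (0 : ℝ)..2 * π, f α := by
  rw [uniformAngle, integral_smul_measure, ENNReal.toReal_ofReal (by positivity),
    intervalIntegral.integral_of_le (by positivity)]

theorem integrable_inv_sqrt_cos_uniformAngle :
    Integrable (fun α : ℝ => (√|Real.cos α|)⁻¹) uniformAngle :=
  ((intervalIntegrable_inv_sqrt_cos 0 (2 * π)).1).smul_measure ENNReal.ofReal_ne_top

theorem ae_uniformAngle_cos_ne_zero : ∀ᵐ α ∂uniformAngle, Real.cos α ≠ 0 := by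
  have hac : uniformAngle ≪ volume :=
    Measure.smul_absolutelyContinuous.trans Measure.restrict_le_self.absolutelyContinuous
  refine hac.ae_le (measure_mono_null (fun α hα => ?_)
    ((countable_range fun k : ℤ => (2 * k + 1) * π / 2).measure_zero volume))
  obtain ⟨k, hk⟩ := Real.cos_eq_zero_iff.1 (not_not.1 hα)
  exact ⟨k, hk.symm⟩

variable {E : Type*} [NormedAddCommGroup E] [InnerProductSpace ℝ E]

theorem norm_cos_smul_add_sin_smul {y e : E} (hy : ‖y‖ = 1) (he : ‖e‖ = 1)
    (hye : inner ℝ y e = 0) (α : ℝ) : ‖Real.cos α • y + Real.sin α • e‖ = 1 := by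
  rw [← sq_eq_sq₀ (norm_nonneg _) zero_le_one, norm_add_sq_real, inner_smul_left,
    inner_smul_right, hye, norm_smul, norm_smul, hy, he]
  simp

variable [MeasurableSpace E] [BorelSpace E] [SecondCountableTopology E]

/-- The law of `cos α • y + sin α • e` for a uniform angle `α` and an independent `y` of law `σ`.
Iterated along an orthonormal family, this builds measures on spheres of increasing dimension. -/
def suspension (σ : Measure E) (e : E) : Measure E :=
  (uniformAngle.prod σ).map fun p => Real.cos p.1 • p.2 + Real.sin p.1 • e

variable (σ : Measure E) (e : E)

theorem measurable_cos_smul_add_sin_smul :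
    Measurable fun p : ℝ × E => Real.cos p.1 • p.2 + Real.sin p.1 • e := by
  fun_prop

variable {σ e} in
theorem ae_suspension {p q : E → Prop} (hq : MeasurableSet {y | q y}) (hp : ∀ᵐ y ∂σ, p y)
    (hpq : ∀ α y, p y → q (Real.cos α • y + Real.sin α • e)) : ∀ᵐ y ∂suspension σ e, q y := by
  rw [suspension, ae_map_iff (measurable_cos_smul_add_sin_smul e).aemeasurable hq]
  filter_upwards [Measure.quasiMeasurePreserving_snd.ae hp] with x hx using hpq _ _ hx

theorem charFun_suspension (ξ : E) :
    charFun (suspension σ e) ξ = ∫ p : ℝ × E,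
      Complex.exp ((Real.cos p.1 * inner ℝ p.2 ξ + Real.sin p.1 * inner ℝ e ξ : ℝ) * I)
        ∂uniformAngle.prod σ := by
  rw [charFun_apply, suspension,
    integral_map (measurable_cos_smul_add_sin_smul e).aemeasurable (by fun_prop)]
  simp only [inner_add_left, real_inner_smul_left]

variable [IsProbabilityMeasure σ]

instance : IsProbabilityMeasure (suspension σ e) :=
  Measure.isProbabilityMeasure_map (measurable_cos_smul_add_sin_smul e).aemeasurable

theorem integrable_exp_cos_mul_add_sin_mul (ξ : E) :
    Integrable (fun p : ℝ × E =>
      Complex.exp ((Real.cos p.1 * inner ℝ p.2 ξ + Real.sin p.1 * inner ℝ e ξ : ℝ) * I))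
      (uniformAngle.prod σ) :=
  Integrable.of_bound (C := 1) (by fun_prop)
    (Eventually.of_forall fun p => (Complex.norm_exp_ofReal_mul_I _).le)

theorem norm_charFun_suspension_mul_le {ξ : E} {w : ℝ} (hw₀ : 0 ≤ w)
    (hw : ∀ᵐ y ∂σ, w ≤ √√(inner ℝ y ξ ^ 2 + inner ℝ e ξ ^ 2)) :
    ‖charFun (suspension σ e) ξ‖ * w ≤ 20 := by
  have hπ : (2 * π)⁻¹ ≤ 1 := inv_le_one_of_one_le₀ (by linarith [Real.pi_gt_three])
  have hinner : ∀ᵐ y ∂σ, ‖(∫ α,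
      Complex.exp ((Real.cos α * inner ℝ y ξ + Real.sin α * inner ℝ e ξ : ℝ) * I)
        ∂uniformAngle) * w‖ ≤ 20 := by
    filter_upwards [hw] with y hy
    rw [integral_uniformAngle, norm_mul, norm_smul, Real.norm_of_nonneg (by positivity),
      Complex.norm_real, Real.norm_of_nonneg hw₀, mul_assoc]
    refine (mul_le_of_le_one_left (by positivity) hπ).trans ?_
    exact (mul_le_mul_of_nonneg_left hy (norm_nonneg _)).trans
      (norm_integral_exp_cos_mul_add_sin_mul_le _ _)
  calc ‖charFun (suspension σ e) ξ‖ * w = ‖charFun (suspension σ e) ξ * w‖ := by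
        rw [norm_mul, Complex.norm_real, Real.norm_of_nonneg hw₀]
    _ ≤ 20 * σ.real univ := by
        rw [charFun_suspension, integral_prod_symm _ (integrable_exp_cos_mul_add_sin_mul σ e ξ),
          ← integral_mul_const]
        exact norm_integral_le_of_norm_le_const hinner
    _ = 20 := by simp

theorem charFun_suspension_eq_integral_charFun (ξ : E) :
    charFun (suspension σ e) ξ =
      ∫ α, Complex.exp ((Real.sin α * inner ℝ e ξ : ℝ) * I) * charFun σ (Real.cos α • ξ)
        ∂uniformAngle := by
  rw [charFun_suspension, integral_prod _ (integrable_exp_cos_mul_add_sin_mul σ e ξ)]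
  congr with α
  rw [charFun_apply, ← integral_const_mul]
  congr with y
  rw [← Complex.exp_add, real_inner_smul_right]
  push_cast
  ring_nf

theorem norm_charFun_suspension_mul_sqrt_le {v : E} {C : ℝ}
    (hC : ∀ ξ, ‖charFun σ ξ‖ * √|inner ℝ v ξ| ≤ C) (ξ : E) :
    ‖charFun (suspension σ e) ξ‖ * √|inner ℝ v ξ| ≤
      C * ∫ α, (√|Real.cos α|)⁻¹ ∂uniformAngle := by
  have hnorm : ‖((√|inner ℝ v ξ| : ℝ) : ℂ)‖ = √|inner ℝ v ξ| := by
    rw [Complex.norm_real, Real.norm_of_nonneg (Real.sqrt_nonneg _)]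
  rw [← integral_const_mul, ← hnorm, ← norm_mul, charFun_suspension_eq_integral_charFun,
    ← integral_mul_const]
  refine norm_integral_le_of_norm_le (integrable_inv_sqrt_cos_uniformAngle.const_mul C) ?_
  filter_upwards [ae_uniformAngle_cos_ne_zero] with α hα
  have hdecay := hC (Real.cos α • ξ)
  rw [real_inner_smul_right, abs_mul, Real.sqrt_mul (abs_nonneg _)] at hdecay
  rw [norm_mul, norm_mul, Complex.norm_exp_ofReal_mul_I, one_mul, hnorm, ← div_eq_mul_inv,
    le_div_iff₀ (Real.sqrt_pos.2 (abs_pos.2 hα))]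
  linarith

variable {ι : Type*}

theorem sqrt_sum_le_sum_sqrt (S : Finset ι) {f : ι → ℝ} (hf : ∀ i, 0 ≤ f i) :
    √(∑ i ∈ S, f i) ≤ ∑ i ∈ S, √(f i) := by
  refine Finset.le_sum_of_subadditive_on_pred Real.sqrt (0 ≤ ·) Real.sqrt_zero.le
    (fun x y hx hy => Real.sqrt_le_iff.2 ⟨by positivity, ?_⟩) (fun _ _ => add_nonneg) f
    fun i _ => hf i
  rw [add_sq, Real.sq_sqrt hx, Real.sq_sqrt hy]
  linarith [mul_nonneg (Real.sqrt_nonneg x) (Real.sqrt_nonneg y)]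

variable [Fintype ι]

theorem sqrt_norm_le_sum_sqrt_abs (ξ : EuclideanSpace ℝ ι) : √‖ξ‖ ≤ ∑ i, √|ξ i| := by
  have hnorm : ‖ξ‖ ≤ ∑ i, |ξ i| := by
    simpa only [EuclideanSpace.norm_eq, Real.norm_eq_abs, Real.sqrt_sq_eq_abs, abs_abs] using
      sqrt_sum_le_sum_sqrt Finset.univ fun i => sq_nonneg |ξ i|
  exact (Real.sqrt_le_sqrt hnorm).trans (sqrt_sum_le_sum_sqrt _ fun i => abs_nonneg _)

theorem measurableSet_sphere_coordinates (S : Finset ι) :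
    MeasurableSet {y : EuclideanSpace ℝ ι | ‖y‖ = 1 ∧ ∀ i ∉ S, y i = 0} := by
  measurability

/-- Some probability measure on the unit sphere of the coordinate subspace `ℝ^S` has a
characteristic function that decays like `|ξᵢ| ^ (-1/2)` for every `i ∈ S`. -/
def HasDecayingSphereMeasure (S : Finset ι) : Prop :=
  ∃ σ : Measure (EuclideanSpace ℝ ι), IsProbabilityMeasure σ ∧
    (∀ᵐ y ∂σ, ‖y‖ = 1 ∧ ∀ i ∉ S, y i = 0) ∧
    ∃ C, ∀ i ∈ S, ∀ ξ, ‖charFun σ ξ‖ * √|ξ i| ≤ C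

theorem hasDecayingSphereMeasure_pair [DecidableEq ι] {i₀ i₁ : ι} (h : i₀ ≠ i₁) :
    HasDecayingSphereMeasure {i₀, i₁} := by
  set e₀ : EuclideanSpace ℝ ι := EuclideanSpace.single i₀ 1
  set e₁ : EuclideanSpace ℝ ι := EuclideanSpace.single i₁ 1
  refine ⟨suspension (Measure.dirac e₀) e₁, inferInstance, ?_, 20, fun i hi ξ => ?_⟩
  · refine ae_suspension (measurableSet_sphere_coordinates _)
      (ae_dirac_iff (measurableSet_singleton e₀) |>.2 rfl) fun α y hy => ?_
    obtain rfl : y = e₀ := hy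
    refine ⟨norm_cos_smul_add_sin_smul (by simp [e₀]) (by simp [e₁])
      (by simp [e₀, e₁, EuclideanSpace.inner_single_left, h]) α,
      fun i hi => ?_⟩
    simp only [Finset.mem_insert, Finset.mem_singleton, not_or] at hi
    simp [e₀, e₁, hi.1, hi.2]
  · refine norm_charFun_suspension_mul_le _ _ (Real.sqrt_nonneg _) ?_
    rw [ae_dirac_eq, eventually_pure]
    refine Real.sqrt_le_sqrt (Real.abs_le_sqrt ?_)
    rcases Finset.mem_insert.1 hi with rfl | hi
    · simp [e₀, e₁, EuclideanSpace.inner_single_left, sq_nonneg]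
    · simp [Finset.mem_singleton.1 hi, e₀, e₁, EuclideanSpace.inner_single_left, sq_nonneg]

theorem HasDecayingSphereMeasure.insert [DecidableEq ι] {S : Finset ι}
    (hS : HasDecayingSphereMeasure S) {j : ι} (hj : j ∉ S) :
    HasDecayingSphereMeasure (insert j S) := by
  obtain ⟨σ, _, hσ, C, hC⟩ := hS
  set e : EuclideanSpace ℝ ι := EuclideanSpace.single j 1
  refine ⟨suspension σ e, inferInstance, ?_,
    max 20 (C * ∫ α, (√|Real.cos α|)⁻¹ ∂uniformAngle), fun i hi ξ => ?_⟩
  · refine ae_suspension (measurableSet_sphere_coordinates _) hσ fun α y ⟨hy, hyS⟩ =>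
      ⟨norm_cos_smul_add_sin_smul hy (by simp [e])
        (by simp [e, EuclideanSpace.inner_single_right, hyS j hj]) α, fun i hi => ?_⟩
    rw [Finset.mem_insert, not_or] at hi
    simp [e, hi.1, hyS i hi.2]
  · rcases Finset.mem_insert.1 hi with rfl | hi
    · refine le_max_of_le_left (norm_charFun_suspension_mul_le _ _ (Real.sqrt_nonneg _)
        (Eventually.of_forall fun y => Real.sqrt_le_sqrt (Real.abs_le_sqrt ?_)))
      simp [e, EuclideanSpace.inner_single_left, sq_nonneg]
    · refine le_max_of_le_right ?_
      simpa [EuclideanSpace.inner_single_left] using norm_charFun_suspension_mul_sqrt_le σ e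
        (v := EuclideanSpace.single i 1)
        (by simpa [EuclideanSpace.inner_single_left] using hC i hi) ξ

theorem hasDecayingSphereMeasure_univ [Nontrivial ι] :
    HasDecayingSphereMeasure (Finset.univ : Finset ι) := by
  classical
  obtain ⟨i₀, i₁, h⟩ := exists_pair_ne ι
  suffices ∀ S : Finset ι, HasDecayingSphereMeasure (S ∪ {i₀, i₁}) by
    simpa only [← Finset.top_eq_univ, ← Finset.sup_eq_union, top_sup_eq] using this Finset.univ
  intro S
  induction S using Finset.induction_on with
  | empty => simpa only [Finset.empty_union] using hasDecayingSphereMeasure_pair h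
  | insert j S _ ih =>
    rw [Finset.insert_union]
    by_cases hj : j ∈ S ∪ {i₀, i₁}
    · rwa [Finset.insert_eq_of_mem hj]
    · exact ih.insert hj

theorem exists_sphereMeasure [Nontrivial ι] :
    ∃ σ : Measure (EuclideanSpace ℝ ι), IsProbabilityMeasure σ ∧ (∀ᵐ y ∂σ, ‖y‖ = 1) ∧
      ∃ C, ∀ ξ, ‖charFun σ ξ‖ * √‖ξ‖ ≤ C := by
  obtain ⟨σ, hσ, hsphere, C, hC⟩ := hasDecayingSphereMeasure_univ (ι := ι)
  refine ⟨σ, hσ, hsphere.mono fun y hy => hy.1, ∑ _ : ι, C, fun ξ => ?_⟩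
  calc ‖charFun σ ξ‖ * √‖ξ‖ ≤ ‖charFun σ ξ‖ * ∑ i, √|ξ i| := by
        gcongr
        exact sqrt_norm_le_sum_sqrt_abs ξ
    _ ≤ ∑ _ : ι, C := by
        rw [Finset.mul_sum]
        exact Finset.sum_le_sum fun i hi => hC i hi ξ

end SphereMeasure

/-! ### Gaussian averages and the Fourier transform -/

section GaussianAverage

open Complex (I)
open scoped Real
open Module (finrank)

variable {V : Type*} [NormedAddCommGroup V]

/-- The Gaussian of width `N` in the frequency variable. -/
def gaussWeight (N : ℝ) (ξ : V) : ℝ := Real.exp (-(‖ξ‖ / N) ^ 2)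

theorem gaussWeight_nonneg (N : ℝ) (ξ : V) : 0 ≤ gaussWeight N ξ := (Real.exp_pos _).le

theorem abs_exp_sub_exp_le {u : ℝ} (hu : 0 ≤ u) :
    |Real.exp (-(u / 2) ^ 2) - Real.exp (-u ^ 2)| ≤ √u * Real.exp (-(u / 2) ^ 2) := by
  set v := 3 / 4 * u ^ 2
  have hv : 0 ≤ v := by positivity
  have hsplit : Real.exp (-u ^ 2) = Real.exp (-v) * Real.exp (-(u / 2) ^ 2) := by
    rw [← Real.exp_add]
    congr 1
    ring
  have hle : 1 - Real.exp (-v) ≤ √u := by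
    rcases le_total 1 u with h | h
    · exact (sub_le_self _ (Real.exp_pos _).le).trans (Real.one_le_sqrt.2 h)
    · have hsqrt : u ≤ √u := Real.le_sqrt_of_sq_le (by nlinarith)
      have hvu : v ≤ u := show 3 / 4 * u ^ 2 ≤ u by nlinarith
      linarith [Real.one_sub_le_exp_neg v]
  have hnonneg : 0 ≤ 1 - Real.exp (-v) := sub_nonneg.2 (Real.exp_le_one_iff.2 (by linarith))
  rw [hsplit, ← one_sub_mul, abs_of_nonneg (mul_nonneg hnonneg (Real.exp_pos _).le)]
  gcongr

theorem abs_gaussWeight_two_mul_sub_le {N : ℝ} (hN : 0 ≤ N) (ξ : V) :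
    |gaussWeight (2 * N) ξ - gaussWeight N ξ| ≤ √‖ξ‖ / √N * gaussWeight (2 * N) ξ := by
  have h := abs_exp_sub_exp_le (div_nonneg (norm_nonneg ξ) hN)
  rwa [div_div, mul_comm N, Real.sqrt_div (norm_nonneg ξ)] at h

variable [InnerProductSpace ℝ V]

theorem gaussWeight_mul_exp_inner (N : ℝ) (w ξ : V) :
    (gaussWeight N ξ : ℂ) * Complex.exp (inner ℝ w ξ * I) =
      Complex.exp (-((N ^ 2)⁻¹ : ℝ) * ‖ξ‖ ^ 2 + I * inner ℝ w ξ) := by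
  rw [gaussWeight, Complex.ofReal_exp, ← Complex.exp_add]
  push_cast
  ring_nf

variable [MeasurableSpace V] [BorelSpace V]

/-- The mass of `η` at the scale `1 / N` around the origin, measured by a Gaussian normalised so
that `π ^ (dim V / 2) * gaussAvg N η` is the integral of `gaussWeight N * charFun η`. -/
def gaussAvg (N : ℝ) (η : Measure V) : ℝ :=
  N ^ finrank ℝ V * ∫ w, Real.exp (-(N * ‖w‖ / 2) ^ 2) ∂η

variable [FiniteDimensional ℝ V]

theorem integrable_gaussWeight {N : ℝ} (hN : 0 < N) : Integrable (gaussWeight N : V → ℝ) := by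
  have h := GaussianFourier.integrable_cexp_neg_mul_sq_norm_add (V := V) (b := ((N ^ 2)⁻¹ : ℝ))
    (by rw [Complex.ofReal_re]; positivity) I 0
  simp_rw [← gaussWeight_mul_exp_inner, inner_zero_left, Complex.ofReal_zero, zero_mul,
    Complex.exp_zero, mul_one] at h
  exact h.re

theorem integral_gaussWeight_mul_exp_inner {N : ℝ} (hN : 0 < N) (w : V) :
    ∫ ξ : V, (gaussWeight N ξ : ℂ) * Complex.exp (inner ℝ w ξ * I) =
      (π ^ ((finrank ℝ V : ℝ) / 2) * N ^ finrank ℝ V * Real.exp (-(N * ‖w‖ / 2) ^ 2) : ℝ) := by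
  have hconst : (π / (N ^ 2)⁻¹) ^ ((finrank ℝ V : ℝ) / 2) =
      π ^ ((finrank ℝ V : ℝ) / 2) * N ^ finrank ℝ V := by
    rw [div_inv_eq_mul, Real.mul_rpow Real.pi_pos.le (by positivity), ← Real.rpow_natCast N 2,
      ← Real.rpow_mul hN.le, Nat.cast_ofNat, mul_div_cancel₀ _ two_ne_zero, Real.rpow_natCast]
  simp_rw [gaussWeight_mul_exp_inner]
  rw [GaussianFourier.integral_cexp_neg_mul_sq_norm_add
    (by rw [Complex.ofReal_re]; positivity), ← hconst, Complex.ofReal_mul, Complex.ofReal_exp,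
    Complex.ofReal_cpow (by positivity)]
  congr 1
  · push_cast
    rfl
  · rw [Complex.I_sq]
    push_cast
    field_simp [Complex.ofReal_ne_zero.2 hN.ne']
    norm_num

theorem integrable_gaussWeight_mul_exp_inner_prod {N : ℝ} (hN : 0 < N) (η : Measure V)
    [IsFiniteMeasure η] :
    Integrable (fun p : V × V => (gaussWeight N p.1 : ℂ) * Complex.exp (inner ℝ p.2 p.1 * I))
      (volume.prod η) := by
  have hcont : Continuous (gaussWeight N : V → ℝ) := by unfold gaussWeight; fun_prop
  refine ((integrable_gaussWeight hN).comp_fst η).mono (by fun_prop)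
    (Eventually.of_forall fun p => ?_)
  rw [norm_mul, Complex.norm_exp_ofReal_mul_I, mul_one, Complex.norm_real]

theorem integral_gaussWeight_mul_charFun {N : ℝ} (hN : 0 < N) (η : Measure V)
    [IsFiniteMeasure η] :
    ∫ ξ, (gaussWeight N ξ : ℂ) * charFun η ξ =
      (π ^ ((finrank ℝ V : ℝ) / 2) * gaussAvg N η : ℝ) := by
  simp_rw [charFun_apply, ← integral_const_mul]
  rw [integral_integral_swap (integrable_gaussWeight_mul_exp_inner_prod hN η)]
  simp_rw [integral_gaussWeight_mul_exp_inner hN]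
  rw [integral_complex_ofReal, integral_const_mul, gaussAvg, mul_assoc]

theorem integrable_gaussWeight_mul_charFun {N : ℝ} (hN : 0 < N) (η : Measure V)
    [IsFiniteMeasure η] : Integrable fun ξ => (gaussWeight N ξ : ℂ) * charFun η ξ :=
  (integrable_gaussWeight hN).ofReal.mul_bdd
    continuous_charFun.aestronglyMeasurable (Eventually.of_forall norm_charFun_le)

/-- The law of `x - y` for independent `x` and `y` of law `μ`. -/
def diffMeasure (μ : Measure V) : Measure V := μ ∗ μ.map Neg.neg

variable (μ τ : Measure V) [IsFiniteMeasure μ]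

instance : IsFiniteMeasure (diffMeasure μ) := by
  unfold diffMeasure
  infer_instance

theorem charFun_diffMeasure (ξ : V) : charFun (diffMeasure μ) ξ = (‖charFun μ ξ‖ ^ 2 : ℝ) := by
  have hneg : charFun (μ.map Neg.neg) ξ = charFun μ (-ξ) := by
    simpa using charFun_map_smul (μ := μ) (-1) ξ
  rw [diffMeasure, charFun_conv, hneg, charFun_neg, Complex.mul_conj', Complex.ofReal_pow]

theorem integrable_gaussWeight_mul_norm_charFun_sq {N : ℝ} (hN : 0 < N) :
    Integrable fun ξ => gaussWeight N ξ * ‖charFun μ ξ‖ ^ 2 := by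
  have h := integrable_gaussWeight_mul_charFun hN (diffMeasure μ)
  simp_rw [charFun_diffMeasure, ← Complex.ofReal_mul] at h
  exact h.re

theorem integral_gaussWeight_mul_norm_charFun_sq {N : ℝ} (hN : 0 < N) :
    ∫ ξ, gaussWeight N ξ * ‖charFun μ ξ‖ ^ 2 =
      π ^ ((finrank ℝ V : ℝ) / 2) * gaussAvg N (diffMeasure μ) := by
  have h := integral_gaussWeight_mul_charFun hN (diffMeasure μ)
  simp_rw [charFun_diffMeasure, ← Complex.ofReal_mul] at h
  rw [integral_complex_ofReal] at h
  exact_mod_cast h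

/-- Passing to the difference measure makes the first factor of
`charFun (τ ∗ diffMeasure μ) = charFun (diffMeasure μ) * charFun τ` nonnegative, so the decay of
`charFun τ` is gained on top of the Gaussian average of `diffMeasure μ` itself. -/
theorem abs_gaussAvg_two_mul_sub_le [IsFiniteMeasure τ] {B N : ℝ}
    (hB : ∀ ξ, ‖charFun τ ξ‖ * √‖ξ‖ ≤ B) (hN : 0 < N) :
    |gaussAvg (2 * N) (τ ∗ diffMeasure μ) - gaussAvg N (τ ∗ diffMeasure μ)| ≤
      B / √N * gaussAvg (2 * N) (diffMeasure μ) := by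
  have hN₂ : 0 < 2 * N := by positivity
  have hπ : 0 < π ^ ((finrank ℝ V : ℝ) / 2) := by positivity
  set ν := diffMeasure μ
  refine le_of_mul_le_mul_left ?_ hπ
  calc π ^ ((finrank ℝ V : ℝ) / 2) * |gaussAvg (2 * N) (τ ∗ ν) - gaussAvg N (τ ∗ ν)|
      = ‖∫ ξ, ((gaussWeight (2 * N) ξ : ℂ) * charFun (τ ∗ ν) ξ -
          gaussWeight N ξ * charFun (τ ∗ ν) ξ)‖ := by
        rw [integral_sub (integrable_gaussWeight_mul_charFun hN₂ _)
          (integrable_gaussWeight_mul_charFun hN _), integral_gaussWeight_mul_charFun hN₂,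
          integral_gaussWeight_mul_charFun hN, ← Complex.ofReal_sub, Complex.norm_real, ← mul_sub,
          norm_mul, Real.norm_of_nonneg hπ.le, Real.norm_eq_abs]
    _ ≤ ∫ ξ, B / √N * (gaussWeight (2 * N) ξ * ‖charFun μ ξ‖ ^ 2) := by
        refine norm_integral_le_of_norm_le
          ((integrable_gaussWeight_mul_norm_charFun_sq μ hN₂).const_mul _)
          (Eventually.of_forall fun ξ => ?_)
        rw [← sub_mul, ← Complex.ofReal_sub, norm_mul, Complex.norm_real, Real.norm_eq_abs,
          charFun_conv, charFun_diffMeasure, norm_mul, Complex.norm_real,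
          Real.norm_of_nonneg (sq_nonneg _)]
        calc _ ≤ √‖ξ‖ / √N * gaussWeight (2 * N) ξ * (‖charFun τ ξ‖ * ‖charFun μ ξ‖ ^ 2) := by
              gcongr
              exact abs_gaussWeight_two_mul_sub_le hN.le ξ
          _ = ‖charFun τ ξ‖ * √‖ξ‖ / √N * (gaussWeight (2 * N) ξ * ‖charFun μ ξ‖ ^ 2) := by ring
          _ ≤ _ := by
              have := gaussWeight_nonneg (2 * N) ξ
              gcongr
              exact hB ξ
    _ = π ^ ((finrank ℝ V : ℝ) / 2) * (B / √N * gaussAvg (2 * N) ν) := by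
        rw [integral_const_mul, integral_gaussWeight_mul_norm_charFun_sq μ hN₂, mul_left_comm]

theorem diffMeasure_eq_map_sub : diffMeasure μ = (μ.prod μ).map fun p => p.1 - p.2 := by
  have hprod : μ.prod (μ.map Neg.neg) = (μ.prod μ).map (Prod.map id Neg.neg) := by
    rw [← Measure.map_prod_map _ _ measurable_id measurable_neg, Measure.map_id]
  rw [diffMeasure, Measure.conv, hprod, Measure.map_map (by fun_prop) (by fun_prop)]
  simp only [Function.comp_def, Prod.map, id_eq, ← sub_eq_add_neg]

theorem integrable_exp_neg_sq (N : ℝ) (z : V) :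
    Integrable (fun w => Real.exp (-(N * ‖z + w‖ / 2) ^ 2)) μ := by
  refine Integrable.of_bound (C := 1) (by fun_prop) (Eventually.of_forall fun w => ?_)
  rw [Real.norm_of_nonneg (Real.exp_pos _).le, Real.exp_le_one_iff]
  exact neg_nonpos.2 (sq_nonneg _)

theorem le_gaussAvg_conv [IsProbabilityMeasure τ] {c N : ℝ}
    (h : ∀ᵐ z ∂τ, c ≤ N ^ finrank ℝ V * ∫ w, Real.exp (-(N * ‖z + w‖ / 2) ^ 2) ∂μ) :
    c ≤ gaussAvg N (τ ∗ μ) := by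
  have hint := integrable_exp_neg_sq (τ ∗ μ) N 0
  simp only [zero_add] at hint
  have hint' := ((integrable_conv_iff (by fun_prop)).1 hint).2
  simp only [Real.norm_of_nonneg (Real.exp_pos _).le] at hint'
  rw [gaussAvg, integral_conv hint, ← integral_const_mul]
  simpa using integral_mono_ae (integrable_const c) (hint'.const_mul _) h

theorem gaussAvg_le_of_forall_le_norm {δ N : ℝ} (hδ : 0 ≤ δ) (hN : 0 ≤ N)
    (h : ∀ᵐ w ∂μ, δ ≤ ‖w‖) :
    gaussAvg N μ ≤ N ^ finrank ℝ V * (Real.exp (-(N * δ / 2) ^ 2) * μ.real univ) := by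
  have hint := integrable_exp_neg_sq μ N 0
  simp only [zero_add] at hint
  unfold gaussAvg
  gcongr
  calc ∫ w, Real.exp (-(N * ‖w‖ / 2) ^ 2) ∂μ ≤ ∫ _, Real.exp (-(N * δ / 2) ^ 2) ∂μ := by
        refine integral_mono_ae hint (integrable_const _) (h.mono fun w hw => ?_)
        beta_reduce
        gcongr
    _ = Real.exp (-(N * δ / 2) ^ 2) * μ.real univ := by simp [mul_comm]

theorem ae_le_norm_conv_diffMeasure {S : Set V} {δ t : ℝ} (hτ : ∀ᵐ z ∂τ, ‖z‖ = t)
    (hμ : ∀ᵐ x ∂μ, x ∈ S) (hS : ∀ x ∈ S, ∀ y ∈ S, δ ≤ |dist x y - t|) :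
    ∀ᵐ w ∂(τ ∗ diffMeasure μ), δ ≤ ‖w‖ := by
  have hdiff : ∀ᵐ w ∂(diffMeasure μ), δ ≤ |‖w‖ - t| := by
    rw [diffMeasure_eq_map_sub, ae_map_iff (by fun_prop)
      (measurableSet_le measurable_const (by fun_prop))]
    filter_upwards [Measure.quasiMeasurePreserving_fst.ae hμ,
      Measure.quasiMeasurePreserving_snd.ae hμ] with p hx hy
    simpa only [dist_eq_norm] using hS p.1 hx p.2 hy
  rw [Measure.conv, ae_map_iff (by fun_prop) (measurableSet_le measurable_const measurable_norm)]
  filter_upwards [Measure.quasiMeasurePreserving_fst.ae hτ,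
    Measure.quasiMeasurePreserving_snd.ae hdiff] with p hz hw
  calc δ ≤ |‖p.2‖ - ‖-p.1‖| := by rwa [norm_neg, hz]
    _ ≤ ‖p.2 - -p.1‖ := abs_norm_sub_norm_le _ _
    _ = ‖p.1 + p.2‖ := by rw [sub_neg_eq_add, add_comm]

end GaussianAverage

/-! ### Gaussian averages of measures with controlled dyadic cells -/

section UpperBound

theorem sum_range_exp_neg_le_two (n : ℕ) : ∑ i ∈ Finset.range n, Real.exp (-(i : ℝ)) ≤ 2 := by
  have hexp : Real.exp (-1) ≤ 1 / 2 := by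
    rw [Real.exp_neg, one_div]
    exact inv_anti₀ two_pos (by linarith [Real.add_one_le_exp 1])
  calc ∑ i ∈ Finset.range n, Real.exp (-(i : ℝ))
      = ∑ i ∈ Finset.range n, Real.exp (-1) ^ i := by
        simp only [← Real.exp_nat_mul, mul_neg_one]
    _ ≤ ∑ i ∈ Finset.range n, (1 / 2) ^ i := by gcongr
    _ ≤ 2 := sum_geometric_two_le n

theorem sum_range_exp_neg_abs_sub_le_four (n p : ℕ) :
    ∑ i ∈ Finset.range n, Real.exp (-|(i : ℝ) - p|) ≤ 4 := by
  have hbelow : ∑ i ∈ Finset.range p, Real.exp (-|(i : ℝ) - p|) ≤ 2 := by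
    rw [← Finset.sum_range_reflect]
    refine (Finset.sum_le_sum fun i hi => ?_).trans (sum_range_exp_neg_le_two p)
    have hcast : ((p - 1 - i : ℕ) : ℝ) = p - 1 - i := by
      rw [Nat.sub_sub, Nat.cast_sub (by have := Finset.mem_range.1 hi; omega)]
      push_cast
      ring
    rw [Real.exp_le_exp, neg_le_neg_iff, hcast, le_abs]
    right
    linarith
  have habove : ∑ i ∈ Finset.range n, Real.exp (-|((p + i : ℕ) : ℝ) - p|) ≤ 2 := by
    simpa using sum_range_exp_neg_le_two n
  calc ∑ i ∈ Finset.range n, Real.exp (-|(i : ℝ) - p|)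
      ≤ ∑ i ∈ Finset.range (p + n), Real.exp (-|(i : ℝ) - p|) :=
        Finset.sum_le_sum_of_subset_of_nonneg (Finset.range_mono (by omega))
          fun _ _ _ => (Real.exp_pos _).le
    _ ≤ 4 := by
        rw [Finset.sum_range_add]
        linarith

variable {d : ℕ}

theorem measurableSet_dyadicTree_cell (j : ℕ) (q : Fin d → ℕ) :
    MeasurableSet ((dyadicTree d).cell j q) :=
  measurable_dyadicTree_code j (measurableSet_singleton q)

theorem comp_dyadicTree_code_eq_sum_indicator (j : ℕ) (g : (Fin d → ℕ) → ℝ) :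
    (fun x => g ((dyadicTree d).code j x)) = fun x =>
      ∑ q ∈ (dyadicTree d).level j, ((dyadicTree d).cell j q).indicator (fun _ => g q) x := by
  classical
  funext x
  simp only [indicator_apply, TreeCoding.cell, mem_ofPred_eq]
  rw [Finset.sum_ite_eq, if_pos ((dyadicTree d).code_mem_level j x)]

theorem integrable_comp_dyadicTree_code (μ : Measure (Euc d)) [IsFiniteMeasure μ] (j : ℕ)
    (g : (Fin d → ℕ) → ℝ) : Integrable (fun x => g ((dyadicTree d).code j x)) μ := by
  rw [comp_dyadicTree_code_eq_sum_indicator]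
  exact integrable_finsetSum _ fun q _ =>
    (integrable_const _).indicator (measurableSet_dyadicTree_cell j q)

theorem integral_comp_dyadicTree_code (μ : Measure (Euc d)) [IsFiniteMeasure μ] (j : ℕ)
    (g : (Fin d → ℕ) → ℝ) :
    ∫ x, g ((dyadicTree d).code j x) ∂μ =
      ∑ q ∈ (dyadicTree d).level j, μ.real ((dyadicTree d).cell j q) * g q := by
  rw [comp_dyadicTree_code_eq_sum_indicator, integral_finsetSum _ fun q _ =>
    (integrable_const _).indicator (measurableSet_dyadicTree_cell j q)]
  simp only [integral_indicator_const _ (measurableSet_dyadicTree_cell j _), smul_eq_mul]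

theorem exp_neg_sq_norm_sub_le_prod {x y : Euc d} (hx : x ∈ unitCube d) (hy : y ∈ unitCube d)
    (j : ℕ) :
    Real.exp (-(2 ^ j * ‖x - y‖ / 2) ^ 2) ≤
      ∏ i, Real.exp 2 * Real.exp
        (-|((dyadicTree d).code j y i : ℝ) - (dyadicTree d).code j x i|) := by
  simp_rw [← Real.exp_add]
  rw [← Real.exp_sum, Real.exp_le_exp, div_pow, mul_pow, EuclideanSpace.norm_sq_eq,
    Finset.mul_sum, Finset.sum_div, ← Finset.sum_neg_distrib]
  refine Finset.sum_le_sum fun i _ => ?_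
  obtain ⟨hx₀, hx₁⟩ := mul_mem_Icc_dyadicTree_code j hx i
  obtain ⟨hy₀, hy₁⟩ := mul_mem_Icc_dyadicTree_code j hy i
  rw [PiLp.sub_apply, Real.norm_eq_abs, sq_abs, ← mul_pow, mul_sub, ← sq_abs]
  set u := (2 : ℝ) ^ j * x i
  set v := (2 : ℝ) ^ j * y i
  have hcode : |((dyadicTree d).code j y i : ℝ) - (dyadicTree d).code j x i| ≤ |u - v| + 1 := by
    rw [abs_le]
    constructor <;> cases abs_cases (u - v) <;> linarith
  nlinarith [sq_nonneg (|u - v| / 2 - 1)]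

theorem sum_level_prod_exp_le (j : ℕ) (p : Fin d → ℕ) :
    ∑ q ∈ (dyadicTree d).level j, ∏ i, Real.exp 2 * Real.exp (-|(q i : ℝ) - p i|) ≤
      (4 * Real.exp 2) ^ d := by
  calc ∑ q ∈ (dyadicTree d).level j, ∏ i, Real.exp 2 * Real.exp (-|(q i : ℝ) - p i|)
      = ∏ i, ∑ n ∈ Finset.range (2 ^ j), Real.exp 2 * Real.exp (-|(n : ℝ) - p i|) :=
        (Finset.prod_univ_sum (fun _ => Finset.range (2 ^ j))
          fun i (n : ℕ) => Real.exp 2 * Real.exp (-|(n : ℝ) - p i|)).symm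
    _ ≤ ∏ _i : Fin d, 4 * Real.exp 2 := by
        refine Finset.prod_le_prod (fun i _ => by positivity) fun i _ => ?_
        rw [← Finset.mul_sum, mul_comm]
        gcongr
        exact sum_range_exp_neg_abs_sub_le_four _ _
    _ = (4 * Real.exp 2) ^ d := by simp

variable (μ : Measure (Euc d)) [IsFiniteMeasure μ] {j : ℕ} {B : ℝ}

theorem integral_exp_neg_sq_norm_sub_le (hμ : ∀ᵐ y ∂μ, y ∈ unitCube d) (hB₀ : 0 ≤ B)
    (hB : ∀ q, μ.real ((dyadicTree d).cell j q) ≤ B) {x : Euc d} (hx : x ∈ unitCube d) :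
    ∫ y, Real.exp (-(2 ^ j * ‖x - y‖ / 2) ^ 2) ∂μ ≤ B * (4 * Real.exp 2) ^ d := by
  set p := (dyadicTree d).code j x
  set g : (Fin d → ℕ) → ℝ := fun q => ∏ i, Real.exp 2 * Real.exp (-|(q i : ℝ) - p i|)
  calc ∫ y, Real.exp (-(2 ^ j * ‖x - y‖ / 2) ^ 2) ∂μ
      ≤ ∫ y, g ((dyadicTree d).code j y) ∂μ :=
        integral_mono_of_nonneg (Eventually.of_forall fun y => (Real.exp_pos _).le)
          (integrable_comp_dyadicTree_code μ j g)
          (hμ.mono fun y hy => exp_neg_sq_norm_sub_le_prod hx hy j)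
    _ = ∑ q ∈ (dyadicTree d).level j, μ.real ((dyadicTree d).cell j q) * g q :=
        integral_comp_dyadicTree_code μ j g
    _ ≤ ∑ q ∈ (dyadicTree d).level j, B * g q := by
        gcongr with q
        exact hB q
    _ ≤ B * (4 * Real.exp 2) ^ d := by
        rw [← Finset.mul_sum]
        gcongr
        exact sum_level_prod_exp_le j p

theorem gaussAvg_diffMeasure_le (hμ : ∀ᵐ y ∂μ, y ∈ unitCube d) (hB₀ : 0 ≤ B)
    (hB : ∀ q, μ.real ((dyadicTree d).cell j q) ≤ B) :
    gaussAvg (2 ^ j) (diffMeasure μ) ≤ 2 ^ (j * d) * (B * (4 * Real.exp 2) ^ d * μ.real univ) := by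
  have hint : Integrable (fun p : Euc d × Euc d => Real.exp (-(2 ^ j * ‖p.1 - p.2‖ / 2) ^ 2))
      (μ.prod μ) := by
    have h := integrable_exp_neg_sq (diffMeasure μ) (2 ^ j) 0
    rw [diffMeasure_eq_map_sub, integrable_map_measure (by fun_prop) (by fun_prop)] at h
    simpa only [Function.comp_def, zero_add] using h
  rw [gaussAvg, finrank_euclideanSpace_fin, ← pow_mul, diffMeasure_eq_map_sub,
    integral_map (by fun_prop) (by fun_prop), integral_prod _ hint]
  gcongr
  calc ∫ x, ∫ y, Real.exp (-(2 ^ j * ‖x - y‖ / 2) ^ 2) ∂μ ∂μ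
      ≤ ∫ _, B * (4 * Real.exp 2) ^ d ∂μ :=
        integral_mono_ae hint.integral_prod_left (integrable_const _)
          (hμ.mono fun x hx => integral_exp_neg_sq_norm_sub_le μ hμ hB₀ hB hx)
    _ = B * (4 * Real.exp 2) ^ d * μ.real univ := by rw [integral_const, smul_eq_mul, mul_comm]

end UpperBound

section LowerBound

theorem exists_nat_sub_nat_mem_Icc {r : ℝ} {M : ℕ} (hr : |r| + 1 ≤ M) :
    ∃ u ≤ M, ∃ v ≤ M, r ∈ Icc ((u : ℝ) - v) (u - v + 1) := by
  obtain ⟨hr₀, hr₁⟩ := abs_le.1 (le_sub_iff_add_le.2 hr)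
  have hle : ⌊r⌋ ≤ M := Int.floor_le_iff.2 (by push_cast; linarith)
  have hge : -(M : ℤ) ≤ ⌊r⌋ := Int.le_floor.2 (by push_cast; linarith)
  have hfloor : ((⌊r⌋.toNat : ℝ) - (-⌊r⌋).toNat) = ⌊r⌋ := by
    exact_mod_cast show ((⌊r⌋.toNat : ℤ) - (-⌊r⌋).toNat) = ⌊r⌋ by omega
  refine ⟨⌊r⌋.toNat, by omega, (-⌊r⌋).toNat, by omega, ?_⟩
  rw [hfloor]
  exact ⟨Int.floor_le r, (Int.lt_floor_add_one r).le⟩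

variable {d l : ℕ}

theorem exists_nat_sub_mem_Icc {z : Fin d → ℝ} (hl : 1 ≤ l) (hz : ∀ i, |z i| ≤ 1 / 4) :
    ∃ u v : Fin d → ℕ, (∀ i, u i ≤ 2 ^ l) ∧ (∀ i, v i ≤ 2 ^ l) ∧
      ∀ i, 2 ^ (l + 1) * z i ∈ Icc ((u i : ℝ) - v i) (u i - v i + 1) := by
  have hbound : ∀ i, |2 ^ (l + 1) * z i| + 1 ≤ (2 ^ l : ℕ) := fun i => by
    have hpow : (2 : ℝ) ≤ 2 ^ l := le_self_pow₀ one_le_two (by omega)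
    rw [abs_mul, abs_of_pos (by positivity), pow_succ]
    push_cast
    nlinarith [hz i]
  choose u hu v hv huv using fun i => exists_nat_sub_nat_mem_Icc (hbound i)
  exact ⟨u, v, hu, hv, huv⟩

theorem card_filter_add_notMem_le {G : Finset (Fin d → ℕ)} {u : Fin d → ℕ}
    (hu : ∀ i, u i ≤ 2 ^ l) :
    {c ∈ (dyadicTree d).level l | c + u ∉ G}.card ≤ ((dyadicTree d).level (l + 1) \ G).card := by
  refine Finset.card_le_card_of_injOn (· + u) (fun c hc => ?_) (add_left_injective u).injOn
  obtain ⟨hcl, hcG⟩ := Finset.mem_filter.1 (Finset.mem_coe.1 hc)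
  refine Finset.mem_coe.2 (Finset.mem_sdiff.2 ⟨?_, hcG⟩)
  simp only [dyadicTree, Fintype.mem_piFinset, Finset.mem_range] at hcl ⊢
  intro i
  have h₁ := hcl i
  have h₂ := hu i
  rw [Pi.add_apply, pow_succ]
  omega

theorem le_card_filter_add_mem {G : Finset (Fin d → ℕ)} {u v : Fin d → ℕ} {ρ : ℝ}
    (hG : G ⊆ (dyadicTree d).level (l + 1))
    (hcard : (1 - 3 * ρ) * 2 ^ ((l + 1) * d) ≤ (G.card : ℝ))
    (hu : ∀ i, u i ≤ 2 ^ l) (hv : ∀ i, v i ≤ 2 ^ l) :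
    ((2 : ℝ)⁻¹ ^ d - 6 * ρ) * 2 ^ ((l + 1) * d) ≤
      ({c ∈ (dyadicTree d).level l | c + u ∈ G ∧ c + v ∈ G}.card : ℝ) := by
  set L := (dyadicTree d).level l
  set Q := {c ∈ L | c + u ∈ G ∧ c + v ∈ G}
  set b := ((dyadicTree d).level (l + 1) \ G).card
  have hb : (b : ℝ) ≤ 3 * ρ * 2 ^ ((l + 1) * d) := by
    simp only [b]
    rw [Finset.card_sdiff_of_subset hG, Nat.cast_sub (Finset.card_le_card hG),
      card_dyadicTree_level]
    push_cast
    linarith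
  have hcover : L ⊆ Q ∪ ({c ∈ L | c + u ∉ G} ∪ {c ∈ L | c + v ∉ G}) := fun c hc => by
    simp only [Q, Finset.mem_union, Finset.mem_filter]
    tauto
  have hL : L.card ≤ Q.card + (b + b) :=
    (Finset.card_le_card hcover).trans <| (Finset.card_union_le _ _).trans <| by
      gcongr
      exact (Finset.card_union_le _ _).trans
        (add_le_add (card_filter_add_notMem_le hu) (card_filter_add_notMem_le hv))
  have hL' : (2 : ℝ) ^ (l * d) ≤ Q.card + (b + b) := by
    rw [card_dyadicTree_level] at hL
    exact_mod_cast hL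
  have hpow : (2 : ℝ)⁻¹ ^ d * 2 ^ ((l + 1) * d) = 2 ^ (l * d) := by
    rw [add_mul, one_mul, pow_add, mul_left_comm, ← mul_pow, inv_mul_cancel₀ two_ne_zero, one_pow,
      mul_one]
  rw [sub_mul, hpow]
  linarith

theorem exp_neg_le_of_mem_cells {k : ℕ} {x y z : Euc d} {c u v : Fin d → ℕ}
    (hx : x ∈ unitCube d) (hy : y ∈ unitCube d) (hxc : x ∈ (dyadicTree d).cell k (c + v))
    (hyc : y ∈ (dyadicTree d).cell k (c + u))
    (hz : ∀ i, 2 ^ k * z i ∈ Icc ((u i : ℝ) - v i) (u i - v i + 1)) :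
    Real.exp (-d) ≤ Real.exp (-(2 ^ k * ‖z + (x - y)‖ / 2) ^ 2) := by
  rw [Real.exp_le_exp, neg_le_neg_iff, div_pow, mul_pow, EuclideanSpace.norm_sq_eq,
    Finset.mul_sum, Finset.sum_div]
  calc ∑ i, (2 ^ k) ^ 2 * ‖(z + (x - y)) i‖ ^ 2 / 2 ^ 2 ≤ ∑ _i : Fin d, (1 : ℝ) := by
        refine Finset.sum_le_sum fun i _ => ?_
        obtain ⟨hx₀, hx₁⟩ := mul_mem_Icc_dyadicTree_code k hx i
        obtain ⟨hy₀, hy₁⟩ := mul_mem_Icc_dyadicTree_code k hy i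
        obtain ⟨hz₀, hz₁⟩ := hz i
        rw [show (dyadicTree d).code k x = c + v from hxc, Pi.add_apply, Nat.cast_add] at hx₀ hx₁
        rw [show (dyadicTree d).code k y = c + u from hyc, Pi.add_apply, Nat.cast_add] at hy₀ hy₁
        rw [Real.norm_eq_abs, sq_abs, ← mul_pow, div_le_one (by positivity), PiLp.add_apply,
          PiLp.sub_apply, mul_add, mul_sub]
        exact sq_le_sq' (by linarith) (by linarith)
    _ = d := by simp

variable (μ : Measure (Euc d)) [IsFiniteMeasure μ]

theorem card_mul_sq_le_measureReal_biUnion_cell_prod {k : ℕ} {Q : Finset (Fin d → ℕ)}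
    {u v : Fin d → ℕ} {b : ℝ} (hb : 0 ≤ b)
    (hu : ∀ c ∈ Q, b ≤ μ.real ((dyadicTree d).cell k (c + u)))
    (hv : ∀ c ∈ Q, b ≤ μ.real ((dyadicTree d).cell k (c + v))) :
    Q.card * b ^ 2 ≤ (μ.prod μ).real
      (⋃ c ∈ Q, (dyadicTree d).cell k (c + v) ×ˢ (dyadicTree d).cell k (c + u)) := by
  have hdisj : (Q : Set (Fin d → ℕ)).PairwiseDisjoint fun c =>
      (dyadicTree d).cell k (c + v) ×ˢ (dyadicTree d).cell k (c + u) := fun c _ c' _ hne =>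
    Disjoint.set_prod_left (disjoint_left.2 fun x hx hx' =>
      hne (add_right_cancel ((Eq.symm hx).trans hx'))) _ _
  rw [measureReal_biUnion_finset hdisj fun c _ =>
    (measurableSet_dyadicTree_cell k _).prod (measurableSet_dyadicTree_cell k _)]
  calc Q.card * b ^ 2 = ∑ _c ∈ Q, b * b := by rw [Finset.sum_const, nsmul_eq_mul, sq]
    _ ≤ _ := Finset.sum_le_sum fun c hc => by
        rw [measureReal_prod_prod]
        exact mul_le_mul (hv c hc) (hu c hc) hb measureReal_nonneg

theorem measureReal_biUnion_cell_prod_mul_le_integral {k : ℕ} {Q : Finset (Fin d → ℕ)}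
    {u v : Fin d → ℕ} {z : Euc d} (hμ : ∀ᵐ x ∂μ, x ∈ unitCube d)
    (hz : ∀ i, 2 ^ k * z i ∈ Icc ((u i : ℝ) - v i) (u i - v i + 1)) :
    (μ.prod μ).real (⋃ c ∈ Q, (dyadicTree d).cell k (c + v) ×ˢ (dyadicTree d).cell k (c + u)) *
      Real.exp (-d) ≤ ∫ w, Real.exp (-(2 ^ k * ‖z + w‖ / 2) ^ 2) ∂(diffMeasure μ) := by
  set P := ⋃ c ∈ Q, (dyadicTree d).cell k (c + v) ×ˢ (dyadicTree d).cell k (c + u)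
  have hP : MeasurableSet P := Finset.measurableSet_biUnion _ fun c _ =>
    (measurableSet_dyadicTree_cell _ _).prod (measurableSet_dyadicTree_cell _ _)
  have hint := integrable_exp_neg_sq (diffMeasure μ) (2 ^ k) z
  rw [diffMeasure_eq_map_sub, integrable_map_measure (by fun_prop) (by fun_prop)] at hint
  rw [diffMeasure_eq_map_sub, integral_map (by fun_prop) (by fun_prop), ← smul_eq_mul,
    ← integral_indicator_const _ hP]
  refine integral_mono_ae ((integrable_const _).indicator hP) hint ?_
  filter_upwards [Measure.quasiMeasurePreserving_fst.ae hμ,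
    Measure.quasiMeasurePreserving_snd.ae hμ] with p hx hy
  by_cases hp : p ∈ P
  · obtain ⟨c, -, hxc, hyc⟩ := mem_iUnion₂.1 hp
    rw [indicator_of_mem hp]
    exact exp_neg_le_of_mem_cells hx hy hxc hyc hz
  · rw [indicator_of_notMem hp]
    exact (Real.exp_pos _).le

theorem le_integral_exp_neg_sq_diffMeasure {ρ : ℝ} {G : Finset (Fin d → ℕ)} {z : Euc d}
    (hl : 1 ≤ l) (hμ : ∀ᵐ x ∂μ, x ∈ unitCube d) (hG : G ⊆ (dyadicTree d).level (l + 1))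
    (hcard : (1 - 3 * ρ) * 2 ^ ((l + 1) * d) ≤ (G.card : ℝ))
    (hGμ : ∀ q ∈ G, 1 / 2 ^ ((l + 1) * d) ≤ μ.real ((dyadicTree d).cell (l + 1) q))
    (hz : ∀ i, |z i| ≤ 1 / 4) :
    ((2 : ℝ)⁻¹ ^ d - 6 * ρ) * Real.exp (-d) ≤
      2 ^ ((l + 1) * d) * ∫ w, Real.exp (-(2 ^ (l + 1) * ‖z + w‖ / 2) ^ 2) ∂(diffMeasure μ) := by
  obtain ⟨u, v, hu, hv, huv⟩ := exists_nat_sub_mem_Icc hl hz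
  set Q := {c ∈ (dyadicTree d).level l | c + u ∈ G ∧ c + v ∈ G}
  set P := ⋃ c ∈ Q, (dyadicTree d).cell (l + 1) (c + v) ×ˢ (dyadicTree d).cell (l + 1) (c + u)
  set b : ℝ := 2 ^ ((l + 1) * d)
  have hb : 0 < b := by positivity
  have hP : Q.card * (1 / b) ^ 2 ≤ (μ.prod μ).real P :=
    card_mul_sq_le_measureReal_biUnion_cell_prod μ (by positivity)
      (fun c hc => hGμ _ (Finset.mem_filter.1 hc).2.1)
      (fun c hc => hGμ _ (Finset.mem_filter.1 hc).2.2)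
  calc ((2 : ℝ)⁻¹ ^ d - 6 * ρ) * Real.exp (-d)
      = b * (((2 : ℝ)⁻¹ ^ d - 6 * ρ) * b * (1 / b) ^ 2 * Real.exp (-d)) := by field_simp
    _ ≤ b * (Q.card * (1 / b) ^ 2 * Real.exp (-d)) := by
        gcongr
        exact le_card_filter_add_mem hG hcard hu hv
    _ ≤ b * ((μ.prod μ).real P * Real.exp (-d)) := by gcongr
    _ ≤ _ := by
        gcongr
        exact measureReal_biUnion_cell_prod_mul_le_integral μ hμ huv

end LowerBound

/-! ### Distances in subsets of the unit cube of large content -/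

section Local

theorem exists_sphereMeasure_radius {ι : Type*} [Fintype ι] [Nontrivial ι] :
    ∃ C, 0 ≤ C ∧ ∀ t > 0, ∃ τ : Measure (EuclideanSpace ℝ ι), IsProbabilityMeasure τ ∧
      (∀ᵐ z ∂τ, ‖z‖ = t) ∧ ∀ ξ, ‖charFun τ ξ‖ * √‖ξ‖ ≤ C / √t := by
  obtain ⟨σ, hσ, hnorm, C, hC⟩ := exists_sphereMeasure (ι := ι)
  refine ⟨C, by simpa using hC 0, fun t ht => ⟨σ.map (t • ·),
    Measure.isProbabilityMeasure_map (by fun_prop), ?_, fun ξ => ?_⟩⟩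
  · rw [ae_map_iff (by fun_prop) (measurableSet_eq_fun measurable_norm measurable_const)]
    filter_upwards [hnorm] with y hy
    rw [norm_smul, hy, mul_one, Real.norm_of_nonneg ht.le]
  · have h := hC (t • ξ)
    rw [norm_smul, Real.norm_of_nonneg ht.le, Real.sqrt_mul ht.le] at h
    rw [charFun_map_smul, le_div_iff₀ (Real.sqrt_pos.2 ht)]
    linarith

theorem two_rpow_div_sqrt_le (j : ℕ) {ε : ℝ} (hε : ε ≤ 1 / 4) :
    (2 : ℝ) ^ ((j + 1 : ℕ) * ε) / √(2 ^ j) ≤ 2 * ((2 : ℝ) ^ (-(1 / 4) : ℝ)) ^ j := by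
  calc (2 : ℝ) ^ ((j + 1 : ℕ) * ε) / √(2 ^ j) = 2 ^ ((j + 1 : ℕ) * ε - j * (1 / 2)) := by
        rw [Real.sqrt_eq_rpow, ← Real.rpow_natCast 2 j, ← Real.rpow_mul zero_le_two,
          ← Real.rpow_sub two_pos]
    _ ≤ 2 ^ (1 + -(1 / 4) * j : ℝ) := by
        refine Real.rpow_le_rpow_of_exponent_le one_le_two ?_
        push_cast
        nlinarith [j.cast_nonneg (α := ℝ)]
    _ = 2 * ((2 : ℝ) ^ (-(1 / 4) : ℝ)) ^ j := by
        rw [Real.rpow_add two_pos, Real.rpow_one, Real.rpow_mul zero_le_two, Real.rpow_natCast]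

theorem sub_le_of_forall_sub_succ_le {f : ℕ → ℝ} {D q : ℝ} {k n : ℕ} (hD : 0 ≤ D) (hq₀ : 0 ≤ q)
    (hq₁ : q < 1) (hf : ∀ j ∈ Finset.Ico k (k + n), f j - f (j + 1) ≤ D * q ^ j) :
    f k - f (k + n) ≤ D * (q ^ k / (1 - q)) := by
  calc f k - f (k + n) = ∑ j ∈ Finset.Ico k (k + n), (f j - f (j + 1)) := by
        rw [Finset.sum_Ico_eq_sum_range, Nat.add_sub_cancel_left]
        exact (Finset.sum_range_sub' (fun i => f (k + i)) n).symm
    _ ≤ ∑ j ∈ Finset.Ico k (k + n), D * q ^ j := Finset.sum_le_sum hf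
    _ ≤ D * (q ^ k / (1 - q)) := by
        rw [← Finset.mul_sum]
        gcongr
        exact geom_sum_Ico_le_of_lt_one hq₀ hq₁

theorem tendsto_pow_mul_exp_neg_sq {δ : ℝ} (hδ : 0 < δ) (d k : ℕ) :
    Tendsto (fun n : ℕ => ((2 : ℝ) ^ (k + n)) ^ d * Real.exp (-(2 ^ (k + n) * δ / 2) ^ 2)) atTop
      (𝓝 0) := by
  have hpow : Tendsto (fun n : ℕ => (2 : ℝ) ^ (k + n)) atTop atTop :=
    (tendsto_pow_atTop_atTop_of_one_lt one_lt_two).comp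
      (tendsto_atTop_mono (Nat.le_add_left · k) tendsto_id)
  refine ((tendsto_rpow_abs_mul_exp_neg_mul_sq_cocompact (a := (δ / 2) ^ 2) (by positivity) d).comp
    (hpow.mono_right atTop_le_cocompact)).congr fun n => ?_
  rw [Function.comp_apply, abs_of_pos (by positivity), Real.rpow_natCast]
  ring_nf

theorem exists_isOpen_gap {X : Type*} [PseudoMetricSpace X] {K : Set X} {t : ℝ}
    (hK : IsCompact K) (ht : ∀ x ∈ K, ∀ y ∈ K, dist x y ≠ t) :
    ∃ U, IsOpen U ∧ K ⊆ U ∧ ∃ δ > 0, ∀ x ∈ U, ∀ y ∈ U, δ ≤ |dist x y - t| := by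
  have hcont : Continuous fun p : X × X => |dist p.1 p.2 - t| := by fun_prop
  obtain ⟨δ, hδ, hKδ⟩ := (hK.prod hK).exists_forall_le' hcont.continuousOn (a := 0)
    fun p hp => abs_pos.2 (sub_ne_zero.2 (ht p.1 hp.1 p.2 hp.2))
  obtain ⟨U, U', hU, hU', hKU, hKU', hgap⟩ := generalized_tube_lemma hK hK
    (isOpen_lt continuous_const hcont) fun p hp => (half_lt_self hδ).trans_le (hKδ p hp)
  exact ⟨U ∩ U', hU.inter hU', subset_inter hKU hKU', δ / 2, half_pos hδ,
    fun x hx y hy => (hgap (mk_mem_prod hx.1 hy.2)).le⟩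

variable {d l : ℕ} {ε ρ B t δ : ℝ} {μ τ : Measure (Euc d)} [IsFiniteMeasure μ]

theorem gaussAvg_sub_gaussAvg_succ_le [IsFiniteMeasure τ] {j : ℕ} (hε : ε ≤ 1 / 4) (hρ : 0 ≤ ρ)
    (hB₀ : 0 ≤ B) (hB : ∀ ξ, ‖charFun τ ξ‖ * √‖ξ‖ ≤ B) (hμ : ∀ᵐ x ∂μ, x ∈ unitCube d)
    (hμ₁ : μ.real univ ≤ 1) (hcell : ∀ q, μ.real ((dyadicTree d).cell (j + 1) q) ≤
      ρ⁻¹ * ((2 : ℝ) ^ ((j + 1 : ℕ) * ε) / 2 ^ ((j + 1) * d))) :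
    gaussAvg (2 ^ j) (τ ∗ diffMeasure μ) - gaussAvg (2 ^ (j + 1)) (τ ∗ diffMeasure μ) ≤
      2 * B * ρ⁻¹ * (4 * Real.exp 2) ^ d * ((2 : ℝ) ^ (-(1 / 4) : ℝ)) ^ j := by
  have hdiff : gaussAvg (2 ^ (j + 1)) (diffMeasure μ) ≤
      ρ⁻¹ * (2 : ℝ) ^ ((j + 1 : ℕ) * ε) * (4 * Real.exp 2) ^ d := by
    calc _ ≤ 2 ^ ((j + 1) * d) * (ρ⁻¹ * ((2 : ℝ) ^ ((j + 1 : ℕ) * ε) / 2 ^ ((j + 1) * d)) *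
          (4 * Real.exp 2) ^ d * μ.real univ) := gaussAvg_diffMeasure_le μ hμ (by positivity) hcell
      _ ≤ 2 ^ ((j + 1) * d) * (ρ⁻¹ * ((2 : ℝ) ^ ((j + 1 : ℕ) * ε) / 2 ^ ((j + 1) * d)) *
          (4 * Real.exp 2) ^ d * 1) := by gcongr
      _ = _ := by field_simp
  calc _ ≤ |gaussAvg (2 ^ (j + 1)) (τ ∗ diffMeasure μ) - gaussAvg (2 ^ j) (τ ∗ diffMeasure μ)| := by
        rw [abs_sub_comm]
        exact le_abs_self _
    _ ≤ B / √(2 ^ j) * gaussAvg (2 ^ (j + 1)) (diffMeasure μ) := by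
        rw [pow_succ']
        exact abs_gaussAvg_two_mul_sub_le μ τ hB (by positivity)
    _ ≤ B / √(2 ^ j) * (ρ⁻¹ * (2 : ℝ) ^ ((j + 1 : ℕ) * ε) * (4 * Real.exp 2) ^ d) := by gcongr
    _ = B * ρ⁻¹ * (4 * Real.exp 2) ^ d * ((2 : ℝ) ^ ((j + 1 : ℕ) * ε) / √(2 ^ j)) := by ring
    _ ≤ B * ρ⁻¹ * (4 * Real.exp 2) ^ d * (2 * ((2 : ℝ) ^ (-(1 / 4) : ℝ)) ^ j) := by
        gcongr
        exact two_rpow_div_sqrt_le j hε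
    _ = _ := by ring

theorem gaussAvg_conv_diffMeasure_le_of_gap [IsProbabilityMeasure τ] {N : ℝ} {V : Set (Euc d)}
    (hδ : 0 ≤ δ) (hN : 0 ≤ N) (hτ : ∀ᵐ z ∂τ, ‖z‖ = t) (hμ : ∀ᵐ x ∂μ, x ∈ V)
    (hμ₁ : μ.real univ ≤ 1) (hgap : ∀ x ∈ V, ∀ y ∈ V, δ ≤ |dist x y - t|) :
    gaussAvg N (τ ∗ diffMeasure μ) ≤ N ^ d * Real.exp (-(N * δ / 2) ^ 2) := by
  have hmass : (τ ∗ diffMeasure μ).real univ ≤ 1 := by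
    have h : charFun (τ ∗ diffMeasure μ) 0 = (μ.real univ ^ 2 : ℝ) := by
      rw [charFun_conv, charFun_diffMeasure, charFun_zero, charFun_zero, probReal_univ]
      simp
    rw [charFun_zero, Complex.ofReal_inj] at h
    exact h.trans_le (pow_le_one₀ measureReal_nonneg hμ₁)
  calc gaussAvg N (τ ∗ diffMeasure μ)
      ≤ N ^ d * (Real.exp (-(N * δ / 2) ^ 2) * (τ ∗ diffMeasure μ).real univ) := by
        simpa only [finrank_euclideanSpace_fin] using gaussAvg_le_of_forall_le_norm _ hδ hN
          (ae_le_norm_conv_diffMeasure μ τ hτ hμ hgap)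
    _ ≤ N ^ d * (Real.exp (-(N * δ / 2) ^ 2) * 1) := by gcongr
    _ = N ^ d * Real.exp (-(N * δ / 2) ^ 2) := by rw [mul_one]

theorem le_gaussAvg_conv_diffMeasure [IsProbabilityMeasure τ] {G : Finset (Fin d → ℕ)}
    (hl : 1 ≤ l) (ht : t ≤ 1 / 4) (hτ : ∀ᵐ z ∂τ, ‖z‖ = t) (hμ : ∀ᵐ x ∂μ, x ∈ unitCube d)
    (hG : G ⊆ (dyadicTree d).level (l + 1))
    (hcard : (1 - 3 * ρ) * 2 ^ ((l + 1) * d) ≤ (G.card : ℝ))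
    (hGμ : ∀ q ∈ G, 1 / 2 ^ ((l + 1) * d) ≤ μ.real ((dyadicTree d).cell (l + 1) q)) :
    ((2 : ℝ)⁻¹ ^ d - 6 * ρ) * Real.exp (-d) ≤ gaussAvg (2 ^ (l + 1)) (τ ∗ diffMeasure μ) := by
  refine le_gaussAvg_conv _ τ (hτ.mono fun z hz => ?_)
  rw [finrank_euclideanSpace_fin, ← pow_mul]
  exact le_integral_exp_neg_sq_diffMeasure μ hl hμ hG hcard hGμ fun i =>
    (PiLp.norm_apply_le z i).trans (hz.trans_le ht)

theorem const_le_of_dist_gap [IsProbabilityMeasure τ] {V : Set (Euc d)} (hl : 1 ≤ l)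
    (hε₀ : 0 ≤ ε) (hε : ε ≤ 1 / 4) (hρ₀ : 0 < ρ) (hρ₁ : ρ < 1)
    (hlε : (1 - ρ) * (2 : ℝ) ^ ((l + 1 : ℕ) * ε) ≤ 1) (hB₀ : 0 ≤ B)
    (hB : ∀ ξ, ‖charFun τ ξ‖ * √‖ξ‖ ≤ B) (ht : t ≤ 1 / 4) (hτ : ∀ᵐ z ∂τ, ‖z‖ = t)
    (hV : V ⊆ unitCube d)
    (hcontent : ENNReal.ofReal (1 - ρ) < (dyadicTree d).content (cubeWeight (d - ε)) V)
    (hδ : 0 ≤ δ) (hgap : ∀ x ∈ V, ∀ y ∈ V, δ ≤ |dist x y - t|) (n : ℕ) :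
    ((2 : ℝ)⁻¹ ^ d - 6 * ρ) * Real.exp (-d) ≤
      (2 ^ (l + 1 + n)) ^ d * Real.exp (-(2 ^ (l + 1 + n) * δ / 2) ^ 2) +
        2 * B * ρ⁻¹ * (4 * Real.exp 2) ^ d *
          (((2 : ℝ) ^ (-(1 / 4) : ℝ)) ^ (l + 1) / (1 - (2 : ℝ) ^ (-(1 / 4) : ℝ))) := by
  obtain ⟨μ, hμV, hμ₁, ⟨G, hG, hcard, hGμ⟩, hcell⟩ :=
    exists_measure_dyadicTree_cell hε₀ hρ₀ hρ₁ hlε n hcontent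
  have : IsFiniteMeasure μ := ⟨hμ₁.trans_lt ENNReal.one_lt_top⟩
  have hmass : μ.real univ ≤ 1 := ENNReal.toReal_le_of_le_ofReal zero_le_one (by simpa using hμ₁)
  have hμ : ∀ᵐ x ∂μ, x ∈ unitCube d := hμV.mono fun x hx => hV hx
  have hlower := le_gaussAvg_conv_diffMeasure hl ht hτ hμ hG hcard fun q hq =>
    (ENNReal.ofReal_le_iff_le_toReal (measure_ne_top _ _)).1 (hGμ q hq)
  have hupper := gaussAvg_conv_diffMeasure_le_of_gap (N := 2 ^ (l + 1 + n)) hδ (by positivity)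
    hτ hμV hmass hgap
  have htelescope := sub_le_of_forall_sub_succ_le (k := l + 1) (n := n)
    (f := fun j => gaussAvg (2 ^ j) (τ ∗ diffMeasure μ))
    (D := 2 * B * ρ⁻¹ * (4 * Real.exp 2) ^ d) (by positivity) (by positivity)
    (Real.rpow_lt_one_of_one_lt_of_neg one_lt_two (show -(1 / 4 : ℝ) < 0 by norm_num))
    fun j hj => by
      obtain ⟨hj₀, hj₁⟩ := Finset.mem_Ico.1 hj
      exact gaussAvg_sub_gaussAvg_succ_le hε hρ₀.le hB₀ hB hμ hmass fun q =>
        ENNReal.toReal_le_of_le_ofReal (by positivity) (hcell (j + 1) ⟨by omega, by omega⟩ q)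
  linarith

theorem exists_level_exponent (hρ : 0 < ρ) {c : ℝ} (hc : 0 < c) (D : ℝ) :
    ∃ l ≥ 1, D * (((2 : ℝ) ^ (-(1 / 4) : ℝ)) ^ (l + 1) / (1 - (2 : ℝ) ^ (-(1 / 4) : ℝ))) < c ∧
      ∃ ε ∈ Ioc (0 : ℝ) (1 / 4), (1 - ρ) * (2 : ℝ) ^ ((l + 1 : ℕ) * ε) ≤ 1 := by
  set q : ℝ := 2 ^ (-(1 / 4) : ℝ)
  have hq : q < 1 := Real.rpow_lt_one_of_one_lt_of_neg one_lt_two (by norm_num)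
  have hlim : Tendsto (fun l : ℕ => D * (q ^ (l + 1) / (1 - q))) atTop (𝓝 0) := by
    simpa using (((tendsto_pow_atTop_nhds_zero_of_lt_one (by positivity) hq).comp
      (tendsto_add_atTop_nat 1)).div_const (1 - q)).const_mul D
  obtain ⟨l, hl, hlc⟩ := ((eventually_ge_atTop 1).and (hlim.eventually_lt_const hc)).exists
  have hcont : Continuous fun ε : ℝ => (1 - ρ) * (2 : ℝ) ^ ((l + 1 : ℕ) * ε) := by
    fun_prop (disch := norm_num)
  have hsmall : ∀ᶠ ε : ℝ in 𝓝[>] 0, (1 - ρ) * (2 : ℝ) ^ ((l + 1 : ℕ) * ε) < 1 :=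
    ((hcont.tendsto 0).mono_left nhdsWithin_le_nhds).eventually_lt_const (by simpa using hρ)
  obtain ⟨ε, hε, hε'⟩ := (hsmall.and (Ioc_mem_nhdsGT (show (0 : ℝ) < 1 / 4 by norm_num))).exists
  exact ⟨l, hl, hlc, ε, hε', hε.le⟩

theorem exists_forall_exists_dist_eq (hd : 2 ≤ d) (hρ₀ : 0 < ρ) (hρ : ρ < (2 : ℝ)⁻¹ ^ d / 6)
    {a : ℝ} (ha : 0 < a) :
    ∃ ε ∈ Ioc (0 : ℝ) (1 / 4), ∀ E ⊆ unitCube d, AnalyticSet E →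
      ENNReal.ofReal (1 - ρ) < (dyadicTree d).content (cubeWeight (d - ε)) E →
      ∀ t ∈ Icc a (1 / 4), ∃ x ∈ E, ∃ y ∈ E, dist x y = t := by
  have : Nontrivial (Fin d) := Fin.nontrivial_iff_two_le.2 hd
  obtain ⟨C, hC₀, hC⟩ := exists_sphereMeasure_radius (ι := Fin d)
  have hpow : (2 : ℝ)⁻¹ ^ d ≤ 1 := pow_le_one₀ (by norm_num) (by norm_num)
  have hρ₁ : ρ < 1 := by linarith
  have hc : 0 < ((2 : ℝ)⁻¹ ^ d - 6 * ρ) * Real.exp (-d) :=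
    mul_pos (by linarith) (Real.exp_pos _)
  obtain ⟨l, hl, hlc, ε, ⟨hε₀, hε⟩, hlε⟩ :=
    exists_level_exponent hρ₀ hc (2 * (C / √a) * ρ⁻¹ * (4 * Real.exp 2) ^ d)
  refine ⟨ε, ⟨hε₀, hε⟩, fun E hE hEana hcontent t ⟨hat, ht⟩ => ?_⟩
  by_contra! hno
  obtain ⟨K, hKE, hK, happrox⟩ := exists_isCompact_forall_open_lt
    (Φ := (dyadicTree d).content (cubeWeight (d - ε)))
    (fun F hF hFc => TreeCoding.content_iUnion_le hF (fun n => content_dyadicTree_ne_top _ _) hFc)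
    hEana hcontent
  obtain ⟨U, hU, hKU, δ, hδ, hgap⟩ := exists_isOpen_gap hK
    fun x hx y hy => hno x (hKE hx) y (hKE hy)
  obtain ⟨V, hVUE, hV⟩ := happrox U hU hKU
  obtain ⟨τ, hτ, hnorm, hdecay⟩ := hC t (ha.trans_le hat)
  have hB : ∀ ξ, ‖charFun τ ξ‖ * √‖ξ‖ ≤ C / √a := fun ξ => (hdecay ξ).trans (by gcongr)
  have hle := const_le_of_dist_gap hl hε₀.le hε hρ₀ hρ₁ hlε (by positivity) hB ht hnorm
    (fun x hx => hE (hVUE hx).2) hV hδ.le fun x hx y hy => hgap x (hVUE hx).1 y (hVUE hy).1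
  have hlimit := ge_of_tendsto' ((tendsto_pow_mul_exp_neg_sq hδ d (l + 1)).add_const _) hle
  linarith

end Local

/-! ### Large distances from large truncations -/

section Global

variable {d : ℕ} {A : Set (Euc d)} {r t : ℝ} {x : Euc d}

theorem normTrunc_subset_unitCube (hr : 0 < r) : normTrunc A r x ⊆ unitCube d := by
  rintro _ ⟨y, ⟨-, hy⟩, rfl⟩ i
  simp only [PiLp.smul_apply, PiLp.sub_apply, smul_eq_mul, ← div_eq_inv_mul]
  exact ⟨div_nonneg (hy i).1 hr.le, (div_le_one hr).2 (hy i).2⟩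

theorem analyticSet_normTrunc (hA : AnalyticSet A) : AnalyticSet (normTrunc A r x) := by
  have hbox : MeasurableSet {y : Euc d | ∀ i, y i - x i ∈ Icc (0 : ℝ) r} := by
    rw [ofPred_forall]
    exact .iInter fun i => measurableSet_Icc.preimage (by fun_prop)
  refine AnalyticSet.image_of_continuous ?_ (by fun_prop)
  rw [inter_eq_iInter]
  exact .iInter (Bool.forall_bool.2 ⟨hbox.analyticSet, hA⟩)

theorem mem_distSet_of_div_mem_distSet_normTrunc (hr : 0 < r)
    (ht : t / r ∈ distSet (normTrunc A r x) (normTrunc A r x)) : t ∈ distSet A A := by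
  obtain ⟨_, ⟨y, ⟨hy, -⟩, rfl⟩, _, ⟨z, ⟨hz, -⟩, rfl⟩, hyz⟩ := ht
  refine ⟨y, hy, z, hz, ?_⟩
  rwa [dist_smul₀, dist_sub_right, Real.norm_of_nonneg (inv_nonneg.2 hr.le), ← div_eq_inv_mul,
    div_left_inj' hr.ne'] at hyz

theorem eventually_exists_mem_Icc_of_ratio_le {R : ℕ → ℝ} {Λ : ℝ} {P : ℕ → Prop}
    (hR : Tendsto R atTop atTop) (hratio : ∀ᶠ n in atTop, R (n + 1) / R n ≤ Λ)
    (hP : ∀ᶠ n in atTop, P n) : ∀ᶠ T in atTop, ∃ n, P n ∧ R n ∈ Icc T (Λ * T) := by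
  obtain ⟨N, hN⟩ := ((hR.eventually_gt_atTop 0).and (hratio.and hP)).exists_forall_of_atTop
  filter_upwards [eventually_gt_atTop (R N)] with T hT
  obtain ⟨p, hp, hp'⟩ := Nat.exists_not_and_succ_of_not_zero_of_exists
    (p := fun n => T ≤ R (N + n)) (not_le.2 hT)
    ((hR.comp (tendsto_atTop_mono (Nat.le_add_left · N) tendsto_id)).eventually_ge_atTop T).exists
  obtain ⟨hpos, hle, -⟩ := hN (N + p) (by omega)
  obtain ⟨hpos', -, hP'⟩ := hN (N + p + 1) (by omega)
  have hΛ : 0 ≤ Λ := (div_pos hpos' hpos).le.trans hle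
  refine ⟨N + p + 1, hP', hp', ((div_le_iff₀ hpos).1 hle).trans ?_⟩
  gcongr
  exact (not_le.1 hp).le

theorem statement8_general {d : ℕ} (hd : 2 ≤ d) {ρ : ℝ} (hρ₀ : 0 < ρ)
    (hρ : ρ < (2 : ℝ)⁻¹ ^ d / 6) {Λ : ℝ} (hΛ : 0 < Λ) :
    ∃ ε > 0, ∀ A : Set (Euc d), AnalyticSet A → ∀ s : ℝ, (d : ℝ) - ε < s →
      ∀ R : ℕ → ℝ, Tendsto R atTop atTop → (∀ᶠ n in atTop, R (n + 1) / R n ≤ Λ) →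
      (∀ᶠ n in atTop,
        ENNReal.ofReal (1 - ρ) < ⨆ x : Euc d, dyadicContent s (normTrunc A (R n) x)) →
      ∃ M : ℝ, 0 < M ∧ Ici M ⊆ distSet A A := by
  have hd' : (2 : ℝ) ≤ d := mod_cast hd
  obtain ⟨ε, ⟨hε₀, hε⟩, hlocal⟩ :=
    exists_forall_exists_dist_eq hd hρ₀ hρ (a := (4 * Λ)⁻¹) (by positivity)
  refine ⟨ε, hε₀, fun A hA s hs R hR hratio hcontent => ?_⟩
  obtain ⟨T, hT⟩ := ((eventually_gt_atTop 0).and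
    (eventually_exists_mem_Icc_of_ratio_le hR hratio hcontent)).exists_forall_of_atTop
  have hT₀ : 0 < T := (hT T le_rfl).1
  refine ⟨T, hT₀, fun t ht => ?_⟩
  rw [mem_Ici] at ht
  obtain ⟨-, n, hn, hle, hge⟩ := hT (4 * t) (by linarith)
  obtain ⟨x, hx⟩ := lt_iSup_iff.1 hn
  have hr : 0 < R n := by linarith
  have hsub := normTrunc_subset_unitCube (A := A) (x := x) hr
  refine mem_distSet_of_div_mem_distSet_normTrunc hr (hlocal _ hsub (analyticSet_normTrunc hA)
    (hx.trans_le (dyadicContent_le_content (by linarith) hs.le hsub)) _ ⟨?_, ?_⟩)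
  · rw [inv_le_iff_one_le_mul₀ (by positivity), div_mul_eq_mul_div, le_div_iff₀ hr]
    linarith
  · rw [div_le_iff₀ hr]
    linarith

end Global

/-- Theorem 1.10: for `d ≥ 2` and all sufficiently small `ρ`, with constants
`0 < a_ρ < b_ρ < 1`, `ε_ρ > 0`: if a Borel set `A ⊆ ℝ^d` admits an exponent
`s > d - ε_ρ` and a sequence `R_n → ∞` with `R_{n+1}/R_n ≤ b_ρ/a_ρ` such that
`sup_x H^s_∞(A_{R_n}(x)) > 1 - ρ` for all sufficiently large `n`, then `A` admits
all sufficiently large distances. -/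
theorem statement8 (d : ℕ) (hd : 2 ≤ d) :
    ∃ ρ₀ : ℝ, 0 < ρ₀ ∧ ∀ ρ : ℝ, 0 < ρ → ρ < ρ₀ →
      ∃ a b ε : ℝ, 0 < a ∧ a < b ∧ b < 1 ∧ 0 < ε ∧
        ∀ A : Set (Euc d), MeasurableSet A →
        ∀ s : ℝ, (d : ℝ) - ε < s →
        ∀ R : ℕ → ℝ, Tendsto R atTop atTop →
          (∀ n, R (n+1) / R n ≤ b / a) →
          (∀ᶠ n in atTop,
            ENNReal.ofReal (1 - ρ) < ⨆ x : Euc d, dyadicContent s (normTrunc A (R n) x)) →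
          ∃ M : ℝ, 0 < M ∧ Ici M ⊆ distSet A A := by
  refine ⟨(2 : ℝ)⁻¹ ^ d / 6, by positivity, fun ρ hρ₀ hρ => ?_⟩
  obtain ⟨ε, hε, h⟩ := statement8_general hd hρ₀ hρ (Λ := 1 / 4 / (1 / 8)) (by norm_num)
  exact ⟨1 / 8, 1 / 4, ε, by norm_num, by norm_num, by norm_num, hε, fun A hA s hs R hR hratio =>
    h A hA.analyticSet s hs R hR (.of_forall hratio)⟩
end
end
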